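/- arXiv:2508.18838 — 2 statements merged into one kernel-verified Lean document; each statement's English description precedes it below -/
import Mathlib

section
/- Let m ≥ 2, d = 2m, and n ≥ 4m+5. Then there exists a set 𝓗 of pairwise disjoint unordered pairs of edges of K_n (one may take 𝓗 = {(x_{2i−1}y_j, x_{2i}y_j) : 1 ≤ i ≤ m+1, 1 ≤ j ≤ 2m+3} on a complete bipartite subgraph of K_n with sides {x_1,…,x_{2m+2}} and {y_1,…,y_{2m+3}}) such that for every flat Z of edges of K_n (i.e., cl_d(Z) = Z) and every partition (𝓗_1,…,𝓗_t) of 𝓗, ν(𝓗) < r_d(Z) + Σ_{i=1}^t floor((r_d(Z ∪ ⋃_{{e,f} ∈ 𝓗_i} {e,f}) − r_d(Z))/2). In particular, the generic d-dimensional rigidity matroid on K_n does not have the matroid matching property for any even d = 2m ≥ 4. -/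
open scoped BigOperators

/-- The row of the `d`-dimensional rigidity matrix of a realisation `p : V → ℝ^d`
indexed by the (unordered) edge `e`. -/
noncomputable def rigRow (d : ℕ) {V : Type*} [DecidableEq V]
    (p : V → Fin d → ℝ) (e : Sym2 V) : V × Fin d → ℝ :=
  Sym2.lift
    ⟨fun u v wi =>
        (((if wi.1 = u then (1 : ℝ) else 0) - (if wi.1 = v then (1 : ℝ) else 0)) *
          (p u wi.2 - p v wi.2)),
      fun u v => by funext wi; ring⟩ e

/-- A realisation is generic if the coordinates of the points form an algebraically
independent set over `ℚ`. -/
def Generic (d : ℕ) {V : Type*} (p : V → Fin d → ℝ) : Prop :=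
  AlgebraicIndependent ℚ fun vi : V × Fin d => p vi.1 vi.2

/-- `rrk d p F` : the rank of the set of rows of the rigidity matrix of `(K_V, p)`
indexed by the edges in `F`.  For generic `p` this is the rank function `r_d` of
the generic `d`-dimensional rigidity matroid. -/
noncomputable def rrk (d : ℕ) {V : Type*} [Fintype V] [DecidableEq V]
    (p : V → Fin d → ℝ) (F : Set (Sym2 V)) : ℕ :=
  Module.finrank ℝ (Submodule.span ℝ (rigRow d p '' F))

/-- `D` is a `k`-fold circuit (with respect to the realisation `p`) :
`r (D \ {f}) = r D` for every `f ∈ D`, and `r D = |D| - k`. -/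
def IsKFoldCircuit (d : ℕ) {V : Type*} [Fintype V] [DecidableEq V]
    (p : V → Fin d → ℝ) (D : Finset (Sym2 V)) (k : ℕ) : Prop :=
  (∀ f ∈ D, rrk d p (↑D \ {f}) = rrk d p ↑D) ∧ rrk d p ↑D + k = D.card

/-- An `R_d`-circuit: `r C = |C| - 1` and `r (C \ {f}) = r C` for all `f ∈ C`. -/
def IsCircuit (d : ℕ) {V : Type*} [Fintype V] [DecidableEq V]
    (p : V → Fin d → ℝ) (C : Finset (Sym2 V)) : Prop :=
  IsKFoldCircuit d p C 1

/-- `A` is a part of the principal partition of the `k`-fold circuit `D`: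
the parts are the sets `D \ B` where `B` runs over the `(k-1)`-fold circuits
contained in `D`. -/
def IsPrincipalPart (d : ℕ) {V : Type*} [Fintype V] [DecidableEq V]
    (p : V → Fin d → ℝ) (D : Finset (Sym2 V)) (k : ℕ) (A : Finset (Sym2 V)) : Prop :=
  ∃ B ⊆ D, IsKFoldCircuit d p B (k - 1) ∧ A = D \ B

/-- Closure in the rigidity matroid: all edges of `K_V` whose addition to `F`
does not increase the rank. -/
def rcl (d : ℕ) {V : Type*} [Fintype V] [DecidableEq V]
    (p : V → Fin d → ℝ) (F : Set (Sym2 V)) : Set (Sym2 V) :=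
  {e | ¬ e.IsDiag ∧ rrk d p (insert e F) = rrk d p F}

/-- A `k`-fold circuit `D` with principal partition `A_1, …, A_ℓ` is balanced if
`r_d (⋂ i, cl_d (D \ A_i)) = ℓ - k`. -/
def IsBalanced (d : ℕ) {V : Type*} [Fintype V] [DecidableEq V]
    (p : V → Fin d → ℝ) (D : Finset (Sym2 V)) (k : ℕ) : Prop :=
  rrk d p (⋂ A ∈ {A | IsPrincipalPart d p D k A}, rcl d p ↑(D \ A)) + k =
    Set.ncard {A | IsPrincipalPart d p D k A}

/-- A vertex is monochromatic if all edges of `D` incident with it lie in a single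
part of the principal partition (and technicolour otherwise). -/
def Monochromatic (d : ℕ) {V : Type*} [Fintype V] [DecidableEq V]
    (p : V → Fin d → ℝ) (D : Finset (Sym2 V)) (k : ℕ) (w : V) : Prop :=
  ∃ A, IsPrincipalPart d p D k A ∧ ∀ e ∈ D, w ∈ e → e ∈ A

/-- The graph `(W, E)` is `R_d`-rigid: it is a complete graph on at most `d+1`
vertices, or `r_d(E) = d|W| - (d+1 choose 2)`. -/
def IsRigidOn (d : ℕ) {V : Type*} [Fintype V] [DecidableEq V]
    (p : V → Fin d → ℝ) (W : Finset V) (E : Finset (Sym2 V)) : Prop :=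
  (W.card ≤ d + 1 ∧ ∀ u ∈ W, ∀ w ∈ W, u ≠ w → s(u, w) ∈ E) ∨
    (rrk d p ↑E : ℤ) + ((d + 1).choose 2 : ℤ) = (d : ℤ) * (W.card : ℤ)

/-- The edge set of the cone of (the graph with edge set) `D` over a new vertex,
realised as `none : Option V`. -/
def coneEdges {V : Type*} [Fintype V] [DecidableEq V] (D : Finset (Sym2 V)) :
    Finset (Sym2 (Option V)) :=
  D.image (Sym2.map Option.some) ∪
    Finset.univ.image fun u : V => s((Option.some u : Option V), (none : Option V))

/-- The degree of the vertex `w` in the edge set `D`. -/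
def degIn {V : Type*} [Fintype V] [DecidableEq V] (D : Finset (Sym2 V)) (w : V) : ℕ :=
  (D.filter fun e => w ∈ e).card

/-- The set of vertices incident with an edge of `F`. -/
def esupp {V : Type*} [Fintype V] [DecidableEq V] (F : Finset (Sym2 V)) : Finset V :=
  Finset.univ.filter fun w => ∃ e ∈ F, w ∈ e

/-- homogeneous coordinates -/
def hat {d : ℕ} {W : Type*} (q : W → Fin d → ℝ) (w : W) (a : Option (Fin d)) : ℝ :=
  a.elim 1 (q w)

noncomputable def expo {d : ℕ} (a : Option (Fin d)) : Fin d →₀ ℕ :=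
  a.elim 0 (fun i => Finsupp.single i 1)

lemma prod_expo {d : ℕ} {W : Type*} (q : W → Fin d → ℝ) (w : W) (a : Option (Fin d)) :
    (expo a).prod (fun i k => q w i ^ k) = hat q w a := by
  cases a <;> simp [expo, hat]

lemma expo_injective {d : ℕ} : Function.Injective (expo (d := d)) := by
  intro a b h
  cases a with
  | none => cases b with
    | none => rfl
    | some b =>
      have := DFunLike.congr_fun h b
      simp [expo] at this
  | some a => cases b with
    | none =>
      have := DFunLike.congr_fun h a
      simp [expo] at this
    | some b =>
      have := DFunLike.congr_fun h b
      by_cases hab : a = b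
      · rw [hab]
      · simp [expo, hab] at this

noncomputable def expo2 {d : ℕ} (s : Sym2 (Option (Fin d))) : Fin d →₀ ℕ :=
  Sym2.lift ⟨fun a b => expo a + expo b, fun _ _ => add_comm _ _⟩ s

lemma degree_expo {d : ℕ} (a : Option (Fin d)) :
    (expo a).degree = a.elim 0 (fun _ => 1) := by
  cases a <;> simp [expo]

lemma expo2_injective {d : ℕ} : Function.Injective (expo2 (d := d)) := by
  intro s t
  induction s using Sym2.ind with
  | _ a b =>
  induction t using Sym2.ind with
  | _ a' b' =>
  intro h
  simp only [expo2, Sym2.lift_mk] at h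
  have hd := congrArg Finsupp.degree h
  simp only [map_add, degree_expo] at hd
  rcases a with _ | a <;> rcases b with _ | b <;> rcases a' with _ | a' <;>
    rcases b' with _ | b' <;> simp at hd <;> try rfl
  · have := expo_injective (a₁ := some b) (a₂ := some b') (by simpa [expo] using h)
    simp [this]
  · have := expo_injective (a₁ := some b) (a₂ := some a') (by simpa [expo] using h)
    simp [this]
  · have := expo_injective (a₁ := some a) (a₂ := some b') (by simpa [expo] using h)
    simp [this]
  · have := expo_injective (a₁ := some a) (a₂ := some a') (by simpa [expo] using h)
    simp [this]
  · simp only [expo, Option.elim_some] at h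
    rw [Finsupp.single_add_single_eq_single_add_single one_ne_zero one_ne_zero] at h
    simp at h
    rcases h with ⟨h1, h2⟩ | ⟨h1, h2⟩
    · simp [h1, h2]
    · simp [h1, h2]

lemma generic_comp {d : ℕ} {V W : Type*} (p : V → Fin d → ℝ) (hp : Generic d p)
    (g : W → V) (hg : Function.Injective g) : Generic d (fun w => p (g w)) := by
  have := AlgebraicIndependent.comp hp (fun z : W × Fin d => (g z.1, z.2)) (by
    rintro ⟨a, b⟩ ⟨c, e⟩ h
    simp only [Prod.mk.injEq] at h
    exact Prod.ext (hg h.1) h.2)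
  exact this

lemma gen_ne {d : ℕ} {W : Type*} (q : W → Fin d → ℝ) (hq : Generic d q) (u v : W) (huv : u ≠ v)
    (i : Fin d) : q u i ≠ q v i := by
  intro h
  have := AlgebraicIndependent.injective hq (a₁ := (u, i)) (a₂ := (v, i)) h
  simp at this
  exact huv this

/-- adjunction of all coordinates of points other than `v0` -/
noncomputable def coordAlg {d : ℕ} {W : Type*} (q : W → Fin d → ℝ) (v0 : W) : Subalgebra ℚ ℝ :=
  Algebra.adjoin ℚ (Set.range fun z : {w : W // w ≠ v0} × Fin d => q z.1 z.2)

lemma hat_mem {d : ℕ} {W : Type*} (q : W → Fin d → ℝ) (v0 w : W) (h : w ≠ v0)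
    (a : Option (Fin d)) : hat q w a ∈ coordAlg q v0 := by
  cases a with
  | none => exact one_mem _
  | some i => exact Algebra.subset_adjoin ⟨(⟨w, h⟩, i), rfl⟩

lemma gen_indep {d : ℕ} {W : Type*} (q : W → Fin d → ℝ) (hq : Generic d q) (v0 : W) :
    AlgebraicIndependent (coordAlg q v0) (q v0) := by
  have h := AlgebraicIndependent.comp hq
    (fun z : Fin d ⊕ ({w : W // w ≠ v0} × Fin d) =>
      Sum.elim (fun i => (v0, i)) (fun y => ((y.1 : W), y.2)) z) (by
    rintro (i | ⟨⟨w, hw⟩, i⟩) (j | ⟨⟨w', hw'⟩, j⟩) h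
    · simp at h; simp [h]
    · simp at h; exact absurd h.1.symm hw'
    · simp at h; exact absurd h.1 hw
    · simp at h; simp [h])
  have h2 : AlgebraicIndependent ℚ (Sum.elim (q v0)
      (fun z : {w : W // w ≠ v0} × Fin d => q z.1 z.2)) := by
    convert h using 1
    funext z
    rcases z with i | z <;> rfl
  exact (AlgebraicIndependent.sumElim_iff.mp h2).2

lemma gen_span {d : ℕ} {W : Type*} (q : W → Fin d → ℝ) (hq : Generic d q) (v0 : W)
    {ι κ : Type*} [Fintype ι] [Fintype κ] (μ : ι → (Fin d →₀ ℕ)) (hμ : Function.Injective μ)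
    (T : κ → ι → ℝ) (hT : ∀ k i, T k i ∈ coordAlg q v0)
    (hc : Fintype.card κ < Fintype.card ι) (c : ℝ) (coef : κ → ℝ)
    (h : ∀ i, c * (μ i).prod (fun j k => q v0 j ^ k) = ∑ k, coef k * T k i) : c = 0 := by
  classical
  let A := coordAlg q v0
  let T' : Matrix κ ι A := fun k i => ⟨T k i, hT k i⟩
  have hni : ¬ Function.Injective (Matrix.mulVecLin T') := fun hinj =>
    absurd (card_le_of_injective A (Matrix.mulVecLin T') hinj) (not_le.mpr hc)
  rw [← LinearMap.ker_eq_bot, Submodule.eq_bot_iff] at hni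
  push Not at hni
  obtain ⟨a, ha, ha0⟩ := hni
  have ha' : ∀ k, ∑ i, T k i * (a i : ℝ) = 0 := by
    intro k
    have h1 : ∑ i, T' k i * a i = 0 := congrFun (LinearMap.mem_ker.mp ha) k
    have h2 := congrArg (Subtype.val) h1
    simpa [T'] using h2
  let P : MvPolynomial (Fin d) A := ∑ i, MvPolynomial.monomial (μ i) (a i)
  have hP : P ≠ 0 := by
    intro hP
    apply ha0
    funext i
    have := congrArg (MvPolynomial.coeff (μ i)) hP
    simpa [P, MvPolynomial.coeff_sum, MvPolynomial.coeff_monomial, hμ.eq_iff] using this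
  have hev : MvPolynomial.aeval (q v0) P ≠ 0 := by
    intro h0
    exact hP ((injective_iff_map_eq_zero _).mp (gen_indep q hq v0) P h0)
  have hev' : MvPolynomial.aeval (q v0) P = ∑ i, (a i : ℝ) * (μ i).prod (fun j k => q v0 j ^ k) := by
    simp only [P, map_sum, MvPolynomial.aeval_monomial]
    rfl
  have : c * MvPolynomial.aeval (q v0) P = 0 := by
    rw [hev', Finset.mul_sum]
    calc ∑ i, c * ((a i : ℝ) * (μ i).prod (fun j k => q v0 j ^ k))
        = ∑ i, ∑ k, coef k * T k i * a i := by
          refine Finset.sum_congr rfl fun i _ => ?_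
          rw [← Finset.sum_mul, ← h i]; ring
      _ = ∑ k, coef k * ∑ i, T k i * a i := by
          rw [Finset.sum_comm]
          refine Finset.sum_congr rfl fun k _ => ?_
          rw [Finset.mul_sum]
          refine Finset.sum_congr rfl fun i _ => ?_
          ring
      _ = 0 := by simp [ha']
  exact (mul_eq_zero.mp this).resolve_right hev

lemma sum_ne {W : Type*} [Fintype W] [DecidableEq W] (v0 : W) (g : W → ℝ) :
    ∑ w ∈ Finset.univ.erase v0, g w = ∑ k : {w : W // w ≠ v0}, g k :=
  Finset.sum_subtype (p := fun w => w ≠ v0) (Finset.univ.erase v0) (by simp) g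

lemma aff_indep {d : ℕ} {W : Type*} [Fintype W] (q : W → Fin d → ℝ) (hq : Generic d q)
    (hc : Fintype.card W ≤ d + 1) (f : W → ℝ) (hf : ∀ a, ∑ w, f w * hat q w a = 0) : f = 0 := by
  classical
  funext v0
  refine gen_span q hq v0 (κ := {w : W // w ≠ v0}) (ι := Option (Fin d)) expo expo_injective
    (fun w a => hat q w a) (fun w a => hat_mem q v0 w w.2 a) ?_ (f v0) (fun w => - f w) ?_
  · simp [Fintype.card_subtype_compl]
    have : 0 < Fintype.card W := Fintype.card_pos_iff.mpr ⟨v0⟩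
    omega
  · intro a
    rw [prod_expo]
    have h := hf a
    rw [← Finset.add_sum_erase _ _ (Finset.mem_univ v0)] at h
    have e : ∑ k : {w : W // w ≠ v0}, -f k * hat q k a = - ∑ w ∈ Finset.univ.erase v0, f w * hat q w a := by
      rw [← Finset.sum_neg_distrib]
      rw [sum_ne v0 (fun w => -(f w * hat q w a))]
      simp
    rw [e]; linarith

lemma quad_indep {d : ℕ} (hd : 0 < d) {W : Type*} [Fintype W] (q : W → Fin d → ℝ)
    (hq : Generic d q)
    (hc : Fintype.card W < (d + 2).choose 2) (u v : W) (huv : u ≠ v) (f : W → ℝ) (c : ℝ)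
    (hf : ∀ a b, ∑ w, f w * (hat q w a * hat q w b) =
      c * ((hat q u a - hat q v a) * (hat q u b - hat q v b))) : f = 0 ∧ c = 0 := by
  classical
  have h1 : ∀ v0, v0 ≠ u → v0 ≠ v → f v0 = 0 := by
    intro v0 hu hv
    let E : Sym2 (Option (Fin d)) → ℝ := fun s => Sym2.lift ⟨fun a b =>
      (hat q u a - hat q v a) * (hat q u b - hat q v b), fun a b => mul_comm _ _⟩ s
    let M : W → Sym2 (Option (Fin d)) → ℝ := fun w s => Sym2.lift ⟨fun a b =>
      hat q w a * hat q w b, fun a b => mul_comm _ _⟩ s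
    refine gen_span q hq v0 (κ := Option {w : W // w ≠ v0}) (ι := Sym2 (Option (Fin d)))
      expo2 expo2_injective
      (fun k s => k.elim (E s) (fun w => M w s)) ?_ ?_ (f v0)
      (fun k => k.elim c (fun w => - f w)) ?_
    · intro k s
      induction s using Sym2.ind with
      | _ a b =>
      have hu' := fun a => hat_mem q v0 u hu.symm a
      have hv' := fun a => hat_mem q v0 v hv.symm a
      rcases k with _ | w
      · exact mul_mem (sub_mem (hu' a) (hv' a)) (sub_mem (hu' b) (hv' b))
      · exact mul_mem (hat_mem q v0 w w.2 a) (hat_mem q v0 w w.2 b)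
    · rw [Sym2.card]
      simp [Fintype.card_subtype_compl]
      have : 0 < Fintype.card W := Fintype.card_pos_iff.mpr ⟨v0⟩
      have e : Fintype.card W - 1 + 1 = Fintype.card W := by omega
      rw [e]; exact hc
    · intro s
      induction s using Sym2.ind with
      | _ a b =>
      have hp : (expo2 s(a, b)).prod (fun j k => q v0 j ^ k) = hat q v0 a * hat q v0 b := by
        rw [← prod_expo, ← prod_expo]
        simp only [expo2, Sym2.lift_mk]
        rw [Finsupp.prod_add_index']
        · simp
        · intros; exact pow_add _ _ _
      rw [hp, Fintype.sum_option]
      have h := hf a b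
      rw [← Finset.add_sum_erase _ _ (Finset.mem_univ v0)] at h
      have e : ∑ k : {w : W // w ≠ v0}, -f k * (hat q k a * hat q k b) =
          - ∑ w ∈ Finset.univ.erase v0, f w * (hat q w a * hat q w b) := by
        rw [← Finset.sum_neg_distrib]
        rw [sum_ne v0 (fun w => -(f w * (hat q w a * hat q w b)))]
        simp
      simp only [Option.elim, E, M, Sym2.lift_mk]
      rw [e]; linarith
  have h2 : ∀ a b, f u * (hat q u a * hat q u b) + f v * (hat q v a * hat q v b) =
      c * ((hat q u a - hat q v a) * (hat q u b - hat q v b)) := by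
    intro a b
    rw [← hf a b]
    symm
    apply Fintype.sum_eq_add u v huv
    intro x hx
    rw [h1 x hx.1 hx.2, zero_mul]
  let i : Fin d := ⟨0, hd⟩
  have hne := gen_ne q hq u v huv i
  have e0 := h2 none none
  have e1 := h2 none (some i)
  have e2 := h2 (some i) (some i)
  simp only [hat, Option.elim_none, Option.elim_some] at e0 e1 e2
  have hne' : q u i - q v i ≠ 0 := sub_ne_zero.mpr hne
  have hv : f v = - f u := by linarith
  have hu : f u = 0 := by
    have : f u * (q u i - q v i) = 0 := by rw [hv] at e1; linarith
    exact (mul_eq_zero.mp this).resolve_right hne'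
  have hv : f v = 0 := by rw [hv, hu]; simp
  refine ⟨?_, ?_⟩
  · funext w
    by_cases hwu : w = u
    · rw [hwu, hu]; rfl
    by_cases hwv : w = v
    · rw [hwv, hv]; rfl
    exact h1 w hwu hwv
  · rw [hu, hv] at e2
    have : c * ((q u i - q v i) * (q u i - q v i)) = 0 := by linarith
    exact (mul_eq_zero.mp this).resolve_right (mul_ne_zero hne' hne')

lemma exists_dep {J K : Type*} [Fintype J] [Fintype K] (h : J → K → ℝ)
    (hc : Fintype.card K < Fintype.card J) : ∃ f : J → ℝ, f ≠ 0 ∧ ∀ k, ∑ j, f j * h j k = 0 := by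
  classical
  let T : Matrix K J ℝ := fun k j => h j k
  have hni : ¬ Function.Injective (Matrix.mulVecLin T) := fun hinj =>
    absurd (card_le_of_injective ℝ (Matrix.mulVecLin T) hinj) (not_le.mpr hc)
  rw [← LinearMap.ker_eq_bot, Submodule.eq_bot_iff] at hni
  push Not at hni
  obtain ⟨a, ha, ha0⟩ := hni
  refine ⟨a, ha0, fun k => ?_⟩
  have h1 : ∑ j, h j k * a j = 0 := congrFun (LinearMap.mem_ker.mp ha) k
  rw [← h1]
  exact Finset.sum_congr rfl fun j _ => mul_comm _ _

/-- the linear map sending edge weights of the bipartite graph to combinations of rows -/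
noncomputable def stressMap (d : ℕ) {V X Y : Type*} [DecidableEq V] [Fintype X] [Fintype Y]
    (p : V → Fin d → ℝ) (g : X ⊕ Y → V) : (X × Y → ℝ) →ₗ[ℝ] (V × Fin d → ℝ) :=
  Fintype.linearCombination ℝ (fun e : X × Y => rigRow d p s(g (Sum.inl e.1), g (Sum.inr e.2)))

lemma stress_eval {d : ℕ} {V X Y : Type*} [DecidableEq V] [Fintype X] [Fintype Y]
    (p : V → Fin d → ℝ) (g : X ⊕ Y → V) (ω : X × Y → ℝ) (c : ℝ) (u v : V)
    (h : stressMap d p g ω = c • rigRow d p s(u, v)) (w : V) (a : Option (Fin d)) :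
    ∑ x, ∑ y, ω (x, y) * (((if w = g (Sum.inl x) then (1 : ℝ) else 0) -
      (if w = g (Sum.inr y) then (1 : ℝ) else 0)) *
        (hat p (g (Sum.inl x)) a - hat p (g (Sum.inr y)) a)) =
    c * (((if w = u then (1 : ℝ) else 0) - (if w = v then (1 : ℝ) else 0)) *
      (hat p u a - hat p v a)) := by
  cases a with
  | none => simp [hat]
  | some i =>
    have h1 := congrFun h (w, i)
    simp only [stressMap, Fintype.linearCombination_apply, Finset.sum_apply, Pi.smul_apply,
      smul_eq_mul, rigRow, Sym2.lift_mk] at h1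
    rw [Fintype.sum_prod_type] at h1
    exact h1

lemma stress_evalX {d : ℕ} {V X Y : Type*} [DecidableEq V] [Fintype X] [Fintype Y]
    (p : V → Fin d → ℝ) (g : X ⊕ Y → V) (hg : Function.Injective g) (ω : X × Y → ℝ) (c : ℝ)
    (u v : V) (h : stressMap d p g ω = c • rigRow d p s(u, v)) (x : X) (a : Option (Fin d)) :
    ∑ y, ω (x, y) * (hat p (g (Sum.inl x)) a - hat p (g (Sum.inr y)) a) =
    c * (((if g (Sum.inl x) = u then (1 : ℝ) else 0) -
      (if g (Sum.inl x) = v then (1 : ℝ) else 0)) * (hat p u a - hat p v a)) := by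
  classical
  rw [← stress_eval p g ω c u v h (g (Sum.inl x)) a, Finset.sum_eq_single x]
  · simp [hg.eq_iff]
  · intro x' _ hx'
    simp [hg.eq_iff, hx'.symm]
  · simp

lemma stress_evalY {d : ℕ} {V X Y : Type*} [DecidableEq V] [Fintype X] [Fintype Y]
    (p : V → Fin d → ℝ) (g : X ⊕ Y → V) (hg : Function.Injective g) (ω : X × Y → ℝ) (c : ℝ)
    (u v : V) (h : stressMap d p g ω = c • rigRow d p s(u, v)) (y : Y) (a : Option (Fin d)) :
    ∑ x, ω (x, y) * (hat p (g (Sum.inr y)) a - hat p (g (Sum.inl x)) a) =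
    c * (((if g (Sum.inr y) = u then (1 : ℝ) else 0) -
      (if g (Sum.inr y) = v then (1 : ℝ) else 0)) * (hat p u a - hat p v a)) := by
  classical
  rw [← stress_eval p g ω c u v h (g (Sum.inr y)) a]
  refine Finset.sum_congr rfl fun x _ => ?_
  rw [Finset.sum_eq_single y]
  · simp [hg.eq_iff]
  · intro y' _ hy'
    simp [hg.eq_iff, hy'.symm]
  · simp

lemma stress_core {d : ℕ} (hd : 0 < d) {X Y : Type*} [Fintype X] [Fintype Y]
    (q : X ⊕ Y → Fin d → ℝ) (hq : Generic d q)
    (hc : Fintype.card (X ⊕ Y) < (d + 2).choose 2) (ω : X × Y → ℝ)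
    (u v : X ⊕ Y) (huv : u ≠ v) (c : ℝ)
    (h : ∀ a b, ∑ x, (∑ y, ω (x, y) * (hat q (Sum.inl x) b - hat q (Sum.inr y) b)) *
        hat q (Sum.inl x) a -
      ∑ y, (∑ x, ω (x, y) * (hat q (Sum.inr y) a - hat q (Sum.inl x) a)) * hat q (Sum.inr y) b =
      c * ((hat q u a - hat q v a) * (hat q u b - hat q v b))) :
    (∀ x, ∑ y, ω (x, y) = 0) ∧ (∀ y, ∑ x, ω (x, y) = 0) ∧ c = 0 := by
  have key := quad_indep hd q hq hc u v huv
    (Sum.elim (fun x => ∑ y, ω (x, y)) (fun y => - ∑ x, ω (x, y))) c (by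
      intro a b
      rw [← h a b, Fintype.sum_sum_type]
      simp only [Sum.elim_inl, Sum.elim_inr, Finset.sum_mul, neg_mul, Finset.sum_neg_distrib]
      rw [← sub_eq_add_neg]
      rw [Finset.sum_comm (f := fun y x => ω (x, y) * (hat q (Sum.inr y) a * hat q (Sum.inr y) b)),
        Finset.sum_comm (f := fun y x => ω (x, y) * (hat q (Sum.inr y) a - hat q (Sum.inl x) a) *
          hat q (Sum.inr y) b)]
      rw [← Finset.sum_sub_distrib, ← Finset.sum_sub_distrib]
      refine Finset.sum_congr rfl fun x _ => ?_
      rw [← Finset.sum_sub_distrib, ← Finset.sum_sub_distrib]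
      refine Finset.sum_congr rfl fun y _ => ?_
      ring)
  refine ⟨fun x => ?_, fun y => ?_, key.2⟩
  · exact congrFun key.1 (Sum.inl x)
  · have := congrFun key.1 (Sum.inr y)
    simpa using this

lemma stress_zero {d : ℕ} (hd : 0 < d) {V X Y : Type*} [DecidableEq V] [Fintype X] [Fintype Y]
    [Nonempty X] [Nonempty Y]
    (p : V → Fin d → ℝ) (hp : Generic d p) (g : X ⊕ Y → V) (hg : Function.Injective g)
    (hc : Fintype.card (X ⊕ Y) < (d + 2).choose 2) (ω : X × Y → ℝ)
    (h : stressMap d p g ω = 0) :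
    (∀ x a, ∑ y, ω (x, y) * hat p (g (Sum.inr y)) a = 0) ∧
    (∀ y a, ∑ x, ω (x, y) * hat p (g (Sum.inl x)) a = 0) := by
  obtain ⟨x0⟩ := ‹Nonempty X›
  obtain ⟨y0⟩ := ‹Nonempty Y›
  have h' : stressMap d p g ω = (0 : ℝ) • rigRow d p s(g (Sum.inl x0), g (Sum.inr y0)) := by
    rw [h, zero_smul]
  have hX := stress_evalX p g hg ω 0 _ _ h'
  have hY := stress_evalY p g hg ω 0 _ _ h'
  simp only [zero_mul] at hX hY
  obtain ⟨h1, h2, -⟩ := stress_core hd (fun w => p (g w)) (generic_comp p hp g hg) hc ω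
    (Sum.inl x0) (Sum.inr y0) (by simp) 0 (by
      intro a b
      have e : ∀ w a, hat (fun w => p (g w)) w a = hat p (g w) a := fun _ _ => rfl
      simp only [e, hX, hY]
      simp)
  refine ⟨fun x a => ?_, fun y a => ?_⟩
  · have := hX x a
    simp only [mul_sub, Finset.sum_sub_distrib, ← Finset.sum_mul, h1] at this
    linarith
  · have := hY y a
    simp only [mul_sub, Finset.sum_sub_distrib, ← Finset.sum_mul, h2] at this
    linarith

lemma stress_coeff {d : ℕ} (hd : 0 < d) {V X Y : Type*} [DecidableEq V] [Fintype X] [Fintype Y]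
    (p : V → Fin d → ℝ) (hp : Generic d p) (g : X ⊕ Y → V) (hg : Function.Injective g)
    (hc : Fintype.card (X ⊕ Y) < (d + 2).choose 2) (ω : X × Y → ℝ) (c : ℝ) (u v : V) (huv : u ≠ v)
    (hE : ∀ x y, s(u, v) ≠ s(g (Sum.inl x), g (Sum.inr y)))
    (h : stressMap d p g ω = c • rigRow d p s(u, v)) : c = 0 := by
  classical
  have hout : ∀ u v, u ≠ v → stressMap d p g ω = c • rigRow d p s(u, v) →
      (∀ z, g z ≠ u) → c = 0 := by
    intro u v huv h hu
    have := stress_eval p g ω c u v h u (some ⟨0, hd⟩)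
    simp only [fun z => (hu z).symm, huv, hat] at this
    simp at this
    rcases this with h | h
    · exact h
    · exact absurd (sub_eq_zero.mp h) (gen_ne p hp u v huv _)
  by_cases hu : ∀ z, g z ≠ u
  · exact hout u v huv h hu
  by_cases hv : ∀ z, g z ≠ v
  · exact hout v u huv.symm (by rw [h, Sym2.eq_swap]) hv
  push Not at hu hv
  obtain ⟨u', rfl⟩ := hu
  obtain ⟨v', rfl⟩ := hv
  have huv' : u' ≠ v' := fun h => huv (by rw [h])
  have hX := stress_evalX p g hg ω c _ _ h
  have hY := stress_evalY p g hg ω c _ _ h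
  have e : ∀ w a, hat (fun w => p (g w)) w a = hat p (g w) a := fun _ _ => rfl
  rcases u' with x1 | y1 <;> rcases v' with x2 | y2
  · obtain ⟨-, -, h3⟩ := stress_core hd (fun w => p (g w)) (generic_comp p hp g hg) hc ω
      (Sum.inl x1) (Sum.inl x2) huv' c (by
        intro a b
        simp only [e, hX, hY]
        simp only [hg.eq_iff, Sum.inl.injEq, reduceCtorEq, if_false, sub_self, zero_mul, mul_zero,
          Finset.sum_const_zero, sub_zero, mul_sub, sub_mul, Finset.sum_sub_distrib]
        simp
        ring)
    exact h3
  · exact absurd rfl (hE x1 y2)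
  · exact absurd Sym2.eq_swap (hE x2 y1)
  · obtain ⟨-, -, h3⟩ := stress_core hd (fun w => p (g w)) (generic_comp p hp g hg) hc ω
      (Sum.inr y1) (Sum.inr y2) huv' (-c) (by
        intro a b
        simp only [e, hX, hY]
        simp only [hg.eq_iff, Sum.inr.injEq, reduceCtorEq, if_false, sub_self, zero_mul, mul_zero,
          Finset.sum_const_zero, sub_zero, mul_sub, sub_mul, Finset.sum_sub_distrib]
        simp
        ring)
    linarith

lemma stress_prod {d : ℕ} {V X Y : Type*} [DecidableEq V] [Fintype X] [Fintype Y]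
    (p : V → Fin d → ℝ) (g : X ⊕ Y → V) (a : X → ℝ) (b : Y → ℝ)
    (ha : ∀ k, ∑ x, a x * hat p (g (Sum.inl x)) k = 0)
    (hb : ∀ k, ∑ y, b y * hat p (g (Sum.inr y)) k = 0) :
    stressMap d p g (fun e => a e.1 * b e.2) = 0 := by
  funext ⟨w, i⟩
  simp only [stressMap, Fintype.linearCombination_apply, Finset.sum_apply, Pi.smul_apply,
    smul_eq_mul, rigRow, Sym2.lift_mk, Pi.zero_apply]
  have ha0 := ha none
  have hb0 := hb none
  have ha1 := ha (some i)
  have hb1 := hb (some i)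
  simp only [hat, Option.elim_none, Option.elim_some, mul_one] at ha0 hb0 ha1 hb1
  rw [Fintype.sum_prod_type]
  simp only [sub_mul, mul_sub, Finset.sum_sub_distrib]
  have A : ∑ x, ∑ y, a x * b y * ((if w = g (Sum.inl x) then (1 : ℝ) else 0) * p (g (Sum.inl x)) i)
      = (∑ x, a x * ((if w = g (Sum.inl x) then (1 : ℝ) else 0) * p (g (Sum.inl x)) i)) * ∑ y, b y := by
    rw [Finset.sum_mul_sum]
    exact Finset.sum_congr rfl fun x _ => Finset.sum_congr rfl fun y _ => by ring
  have B : ∑ x, ∑ y, a x * b y * ((if w = g (Sum.inl x) then (1 : ℝ) else 0) * p (g (Sum.inr y)) i)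
      = (∑ x, a x * (if w = g (Sum.inl x) then (1 : ℝ) else 0)) * ∑ y, b y * p (g (Sum.inr y)) i := by
    rw [Finset.sum_mul_sum]
    exact Finset.sum_congr rfl fun x _ => Finset.sum_congr rfl fun y _ => by ring
  have C : ∑ x, ∑ y, a x * b y * ((if w = g (Sum.inr y) then (1 : ℝ) else 0) * p (g (Sum.inl x)) i)
      = (∑ x, a x * p (g (Sum.inl x)) i) * ∑ y, b y * (if w = g (Sum.inr y) then (1 : ℝ) else 0) := by
    rw [Finset.sum_mul_sum]
    exact Finset.sum_congr rfl fun x _ => Finset.sum_congr rfl fun y _ => by ring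
  have D : ∑ x, ∑ y, a x * b y * ((if w = g (Sum.inr y) then (1 : ℝ) else 0) * p (g (Sum.inr y)) i)
      = (∑ x, a x) * ∑ y, b y * ((if w = g (Sum.inr y) then (1 : ℝ) else 0) * p (g (Sum.inr y)) i) := by
    rw [Finset.sum_mul_sum]
    exact Finset.sum_congr rfl fun x _ => Finset.sum_congr rfl fun y _ => by ring
  rw [A, B, C, D, ha0, hb0, ha1, hb1]
  simp

/-- `J`-indexed affine dependencies vanishing off `d+1` indices vanish. -/
lemma dep_zero {d : ℕ} {V J : Type*} [Fintype J]
    (p : V → Fin d → ℝ) (hp : Generic d p) (g : J → V) (hg : Function.Injective g)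
    (S : Finset J) (hS : Fintype.card J ≤ S.card + d + 1) (f : J → ℝ)
    (hf : ∀ k, ∑ x, f x * hat p (g x) k = 0) (h0 : ∀ x ∈ S, f x = 0) : f = 0 := by
  classical
  have := aff_indep (W := {x // x ∉ S}) (fun x => p (g x))
    (generic_comp p hp (fun x : {x // x ∉ S} => g x) (hg.comp Subtype.val_injective)) (by
      rw [Fintype.card_subtype_compl]
      simp; omega) (fun x => f x) (by
      intro k
      rw [← hf k]
      have e : ∀ w : {x // x ∉ S}, hat (fun x : {x // x ∉ S} => p (g x)) w k = hat p (g w) k :=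
        fun _ => rfl
      simp only [e]
      rw [← Finset.sum_subtype (p := fun x => x ∉ S) (Sᶜ) (by simp)
        (fun x => f x * hat p (g x) k)]
      refine Finset.sum_subset (Finset.subset_univ _) fun x _ hx => ?_
      rw [h0 x (by simpa using hx), zero_mul])
  funext x
  by_cases hx : x ∈ S
  · exact h0 x hx
  · exact congrFun this ⟨x, hx⟩

/-- vectors supported on the colour class `k` -/
def colSub {E K : Type*} (c : E → K) (k : K) : Submodule ℝ (E → ℝ) where
  carrier := {ω | ∀ e, c e ≠ k → ω e = 0}
  add_mem' := by
    intro a b ha hb e he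
    simp [ha e he, hb e he]
  zero_mem' := by intro e _; rfl
  smul_mem' := by
    intro r a ha e he
    simp [ha e he]

def nulSub {E K M : Type*} [AddCommGroup M] [Module ℝ M] (c : E → K)
    (L : (E → ℝ) →ₗ[ℝ] M) (W : Submodule ℝ M) (k : K) : Submodule ℝ (E → ℝ) :=
  colSub c k ⊓ W.comap L

lemma finrank_map_ker {N M : Type*} [AddCommGroup N] [Module ℝ N] [AddCommGroup M] [Module ℝ M]
    [FiniteDimensional ℝ N] (L : N →ₗ[ℝ] M) (P : Submodule ℝ N) :
    Module.finrank ℝ (P.map L) + Module.finrank ℝ ((P ⊓ LinearMap.ker L : Submodule ℝ N)) =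
      Module.finrank ℝ P := by
  rw [← LinearMap.finrank_range_add_finrank_ker (L.domRestrict P)]
  congr 1
  · rw [LinearMap.range_domRestrict]
  · have : LinearMap.ker (L.domRestrict P) = (P ⊓ LinearMap.ker L).comap P.subtype := by
      ext x; simp
    rw [this]
    exact (LinearEquiv.finrank_eq (Submodule.comapSubtypeEquivOfLe inf_le_left)).symm

lemma finrank_colSub {E K : Type*} [Fintype E] [DecidableEq K] (c : E → K) (k : K) :
    Fintype.card {e // c e = k} ≤ Module.finrank ℝ (colSub c k) := by
  let f : ({e // c e = k} → ℝ) →ₗ[ℝ] colSub c k :=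
    LinearMap.codRestrict (colSub c k)
      (Function.ExtendByZero.linearMap ℝ (Subtype.val : {e // c e = k} → E)) (by
      intro x e he
      change Function.extend _ _ _ _ = _
      rw [Function.extend_apply']
      · rfl
      · rintro ⟨a, rfl⟩
        exact he a.2)
  have hf : Function.Injective f := by
    intro x y h
    have h1 := congrArg Subtype.val h
    funext e
    have h2 := congrFun h1 e
    change Function.extend _ _ _ _ = Function.extend _ _ _ _ at h2
    rwa [Subtype.val_injective.extend_apply, Subtype.val_injective.extend_apply] at h2
  have := LinearMap.finrank_le_finrank_of_injective hf
  simpa using this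

lemma rank_part {E K M : Type*} [Fintype E] [DecidableEq K] [AddCommGroup M] [Module ℝ M]
    [FiniteDimensional ℝ M] (c : E → K)
    (L : (E → ℝ) →ₗ[ℝ] M) (W : Submodule ℝ M) (k : K) :
    Module.finrank ℝ W + Fintype.card {e // c e = k} ≤
      Module.finrank ℝ ((W ⊔ (colSub c k).map L : Submodule ℝ M)) +
        Module.finrank ℝ (nulSub c L W k) := by
  have h1 := finrank_colSub c k
  have h2 := finrank_map_ker L (colSub c k)
  have h3 := finrank_map_ker L (nulSub c L W k)
  have h4 := Submodule.finrank_sup_add_finrank_inf_eq W ((colSub c k).map L)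
  have e1 : (nulSub c L W k) ⊓ LinearMap.ker L = colSub c k ⊓ LinearMap.ker L := by
    ext x
    simp only [nulSub, Submodule.mem_inf, Submodule.mem_comap, LinearMap.mem_ker]
    constructor
    · rintro ⟨⟨a, b⟩, h⟩; exact ⟨a, h⟩
    · rintro ⟨a, h⟩; exact ⟨⟨a, by rw [h]; exact zero_mem _⟩, h⟩
  have e2 : (nulSub c L W k).map L = W ⊓ (colSub c k).map L := by
    ext x
    simp only [nulSub, Submodule.mem_inf, Submodule.mem_comap, Submodule.mem_map]
    constructor
    · rintro ⟨y, ⟨a, b⟩, rfl⟩; exact ⟨b, y, a, rfl⟩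
    · rintro ⟨a, y, h, rfl⟩; exact ⟨y, ⟨h, a⟩, rfl⟩
  rw [e1, e2] at h3
  omega

lemma extremal {E K M : Type*} [Fintype E] [Fintype K] [DecidableEq K] [AddCommGroup M]
    [Module ℝ M] [FiniteDimensional ℝ M] (c : E → K)
    (L : (E → ℝ) →ₗ[ℝ] M) (W : Submodule ℝ M) (hL : Module.finrank ℝ (LinearMap.ker L) ≤ 2)
    (h : Module.finrank ℝ W + 2 ≤ ∑ k, (Module.finrank ℝ (nulSub c L W k) + 1) / 2) :
    (∀ k, Module.finrank ℝ (nulSub c L W k) ≤ 1) ∧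
    (∀ s ∈ LinearMap.ker L, ∀ k, (fun e => if c e = k then s e else 0) ∈ nulSub c L W k) ∧
    (∀ w ∈ W, ∃ ω : K → E → ℝ, (∀ k, ω k ∈ nulSub c L W k) ∧ L (∑ k, ω k) = w) := by
  let Φ : ((k : K) → nulSub c L W k) →ₗ[ℝ] (E → ℝ) :=
    ∑ k, (nulSub c L W k).subtype ∘ₗ LinearMap.proj k
  have hΦ : ∀ f, Φ f = ∑ k, (f k : E → ℝ) := by
    intro f; simp [Φ]
  have hΦe : ∀ f k e, c e = k → Φ f e = (f k : E → ℝ) e := by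
    intro f k e he
    rw [hΦ, Finset.sum_apply, Finset.sum_eq_single k]
    · intro k' _ hk'
      exact (f k').2.1 e (fun h => hk' (h.symm.trans he))
    · simp
  have hinj : Function.Injective Φ := by
    intro f f' hff
    funext k
    apply Subtype.ext
    funext e
    by_cases he : c e = k
    · rw [← hΦe f k e he, ← hΦe f' k e he, hff]
    · rw [(f k).2.1 e he, (f' k).2.1 e he]
  let Ψ : ((k : K) → nulSub c L W k) →ₗ[ℝ] M := L ∘ₗ Φ
  have hrange : LinearMap.range Ψ ≤ W := by
    rintro _ ⟨f, rfl⟩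
    change L (Φ f) ∈ W
    rw [hΦ, map_sum]
    exact sum_mem fun k _ => (f k).2.2
  have hker : (LinearMap.ker Ψ).map Φ ≤ LinearMap.ker L := by
    rintro _ ⟨f, hf, rfl⟩
    exact hf
  have hkd : Module.finrank ℝ ((LinearMap.ker Ψ).map Φ) = Module.finrank ℝ (LinearMap.ker Ψ) :=
    (LinearEquiv.finrank_eq (Submodule.equivMapOfInjective Φ hinj _)).symm
  have r1 := Submodule.finrank_mono hrange
  have r2 := Submodule.finrank_mono hker
  have r3 := LinearMap.finrank_range_add_finrank_ker Ψ
  rw [Module.finrank_pi_fintype] at r3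
  have r4 : ∑ k, (Module.finrank ℝ (nulSub c L W k) + 1) / 2 ≤
      ∑ k, Module.finrank ℝ (nulSub c L W k) :=
    Finset.sum_le_sum fun k _ => by omega
  have hone : ∀ k, Module.finrank ℝ (nulSub c L W k) ≤ 1 := by
    by_contra hcon
    push Not at hcon
    obtain ⟨k0, hk0⟩ := hcon
    have : ∑ k, (Module.finrank ℝ (nulSub c L W k) + 1) / 2 <
      ∑ k, Module.finrank ℝ (nulSub c L W k) :=
      Finset.sum_lt_sum (fun k _ => by omega) ⟨k0, Finset.mem_univ _, by omega⟩
    omega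
  have hR : LinearMap.range Ψ = W := Submodule.eq_of_le_of_finrank_le hrange (by omega)
  have hK : (LinearMap.ker Ψ).map Φ = LinearMap.ker L :=
    Submodule.eq_of_le_of_finrank_le hker (by omega)
  refine ⟨hone, ?_, ?_⟩
  · intro s hs k
    rw [← hK] at hs
    obtain ⟨f, hf, rfl⟩ := hs
    have : (fun e => if c e = k then Φ f e else 0) = (f k : E → ℝ) := by
      funext e
      by_cases he : c e = k
      · simp only [he, if_true]; exact hΦe f k e he
      · simp only [he, if_false]; exact ((f k).2.1 e he).symm
    rw [this]
    exact (f k).2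
  · intro w hw
    rw [← hR] at hw
    obtain ⟨f, rfl⟩ := hw
    exact ⟨fun k => f k, fun k => (f k).2, by rw [← hΦ]; rfl⟩

/-- two elements of a submodule of dimension at most one are proportional -/
lemma prop_of_finrank_le_one {E : Type*} [Fintype E] (N : Submodule ℝ (E → ℝ))
    (h : Module.finrank ℝ N ≤ 1) (s t : E → ℝ) (hs : s ∈ N) (ht : t ∈ N) (e f : E) :
    s e * t f = s f * t e := by
  obtain ⟨v, hv⟩ := finrank_le_one_iff.mp h
  obtain ⟨a, ha⟩ := hv ⟨s, hs⟩
  obtain ⟨b, hb⟩ := hv ⟨t, ht⟩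
  have ha' : s = a • (v : E → ℝ) := (congrArg Subtype.val ha).symm
  have hb' : t = b • (v : E → ℝ) := (congrArg Subtype.val hb).symm
  rw [ha', hb']
  simp only [Pi.smul_apply, smul_eq_mul]
  ring

lemma exists_a {d : ℕ} {V J : Type*} [Fintype J]
    (p : V → Fin d → ℝ) (hp : Generic d p) (g : J → V) (hg : Function.Injective g)
    (hJ : Fintype.card J = d + 2) :
    ∃ a : J → ℝ, (∀ k, ∑ x, a x * hat p (g x) k = 0) ∧ ∀ x, a x ≠ 0 := by
  classical
  obtain ⟨f, hf0, hf⟩ := exists_dep (K := Option (Fin d)) (fun x k => hat p (g x) k)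
    (by simp [hJ])
  refine ⟨f, hf, fun x hx => hf0 ?_⟩
  exact dep_zero p hp g hg {x} (by simp; omega) f hf (by simpa using hx)

lemma exists_b {d : ℕ} {V J : Type*} [Fintype J]
    (p : V → Fin d → ℝ) (hp : Generic d p) (g : J → V) (hg : Function.Injective g)
    (hJ : Fintype.card J = d + 3) (j : J) :
    ∃ b : J → ℝ, (∀ k, ∑ x, b x * hat p (g x) k = 0) ∧ b j = 0 ∧ ∀ x, x ≠ j → b x ≠ 0 := by
  classical
  obtain ⟨f, hf0, hf⟩ := exists_dep (K := Option (Option (Fin d)))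
    (fun x k => k.elim (if x = j then 1 else 0) (fun k => hat p (g x) k))
    (by simp [hJ])
  have hj : f j = 0 := by simpa using hf none
  refine ⟨f, fun k => hf (some k), hj, fun x hxj hx => hf0 ?_⟩
  refine dep_zero p hp g hg {j, x} ?_ f (fun k => hf (some k)) ?_
  · rw [Finset.card_pair hxj.symm]; omega
  · intro y hy
    simp only [Finset.mem_insert, Finset.mem_singleton] at hy
    rcases hy with rfl | rfl
    · exact hj
    · exact hx

lemma nullity_bound {d : ℕ} (hd : 0 < d) {V I Y K : Type*} [DecidableEq V]
    [Fintype V] [Fintype I] [Fintype Y] [Fintype K] [DecidableEq K]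
    (p : V → Fin d → ℝ) (hp : Generic d p) (g : (I × Bool) ⊕ Y → V) (hg : Function.Injective g)
    (hX : Fintype.card (I × Bool) = d + 2) (hY : Fintype.card Y = d + 3)
    (hc : Fintype.card ((I × Bool) ⊕ Y) < (d + 2).choose 2) (κ : I × Y → K)
    (Z : Set (Sym2 V)) :
    ∑ k, (Module.finrank ℝ (nulSub (fun e : (I × Bool) × Y => κ (e.1.1, e.2)) (stressMap d p g)
      (Submodule.span ℝ (rigRow d p '' Z)) k) + 1) / 2 ≤
      Module.finrank ℝ (Submodule.span ℝ (rigRow d p '' Z)) + 1 := by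
  classical
  have hgX : Function.Injective (fun x : I × Bool => g (Sum.inl x)) := hg.comp Sum.inl_injective
  have hgY : Function.Injective (fun y : Y => g (Sum.inr y)) := hg.comp Sum.inr_injective
  obtain ⟨a, ha, ha0⟩ := exists_a p hp _ hgX hX
  choose b hb hb0 hb1 using exists_b p hp _ hgY hY
  obtain ⟨x0⟩ : Nonempty (I × Bool) := Fintype.card_pos_iff.mp (by omega)
  have : Nonempty (I × Bool) := ⟨x0⟩
  have : Nontrivial Y := Fintype.one_lt_card_iff_nontrivial.mp (by omega)
  obtain ⟨y0, y1, hy01⟩ := exists_pair_ne Y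
  set L := stressMap d p g with hLdef
  have hab : ∀ j, (fun e : (I × Bool) × Y => a e.1 * b j e.2) ∈ LinearMap.ker L := fun j =>
    LinearMap.mem_ker.mpr (stress_prod p g a (b j) ha (hb j))
  have hdepY : ∀ s ∈ LinearMap.ker L, ∀ x k, ∑ y, s (x, y) * hat p (g (Sum.inr y)) k = 0 :=
    fun s hs => (stress_zero hd p hp g hg hc s (LinearMap.mem_ker.mp hs)).1
  have hdepX : ∀ s ∈ LinearMap.ker L, ∀ y k, ∑ x, s (x, y) * hat p (g (Sum.inl x)) k = 0 :=
    fun s hs => (stress_zero hd p hp g hg hc s (LinearMap.mem_ker.mp hs)).2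
  have hkerX : ∀ s ∈ LinearMap.ker L, ∀ x x' y, s (x, y) * a x' = s (x', y) * a x := by
    intro s hs x x' y
    have := dep_zero p hp _ hgX {x} (by rw [Finset.card_singleton, hX]; omega) (fun z => s (z, y) * a x - s (x, y) * a z)
      (by
        intro k
        have h1 := hdepX s hs y k
        have h2 := ha k
        calc ∑ z, (s (z, y) * a x - s (x, y) * a z) * hat p (g (Sum.inl z)) k
            = a x * ∑ z, s (z, y) * hat p (g (Sum.inl z)) k -
              s (x, y) * ∑ z, a z * hat p (g (Sum.inl z)) k := by
              rw [Finset.mul_sum, Finset.mul_sum, ← Finset.sum_sub_distrib]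
              exact Finset.sum_congr rfl fun z _ => by ring
          _ = 0 := by rw [h1, h2]; simp)
      (by simp)
    have h3 := congrFun this x'
    simp only [Pi.zero_apply] at h3
    linarith
  have hL : Module.finrank ℝ (LinearMap.ker L) ≤ 2 := by
    let f : LinearMap.ker L →ₗ[ℝ] (Fin 2 → ℝ) :=
      (LinearMap.pi ![LinearMap.proj (x0, y0), LinearMap.proj (x0, y1)]) ∘ₗ
        (LinearMap.ker L).subtype
    have hf : Function.Injective f := by
      rw [injective_iff_map_eq_zero]
      intro s hs
      have e0 : (s : (I × Bool) × Y → ℝ) (x0, y0) = 0 := congrFun hs 0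
      have e1 : (s : (I × Bool) × Y → ℝ) (x0, y1) = 0 := congrFun hs 1
      have h1 := dep_zero p hp _ hgY {y0, y1} (by rw [Finset.card_pair hy01]; omega)
        (fun y => (s : (I × Bool) × Y → ℝ) (x0, y)) (hdepY s s.2 x0) (by
          intro y hy
          simp only [Finset.mem_insert, Finset.mem_singleton] at hy
          rcases hy with rfl | rfl
          · exact e0
          · exact e1)
      apply Subtype.ext
      funext ⟨x, y⟩
      have h2 := hkerX s s.2 x x0 y
      have h3 : (s : (I × Bool) × Y → ℝ) (x0, y) = 0 := congrFun h1 y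
      rw [h3, zero_mul] at h2
      exact (mul_eq_zero.mp h2).resolve_right (ha0 x0)
    have := LinearMap.finrank_le_finrank_of_injective hf
    simpa using this
  by_contra hcon
  set W := Submodule.span ℝ (rigRow d p '' Z) with hW
  obtain ⟨hone, hpr, hsurj⟩ := extremal (fun e : (I × Bool) × Y => κ (e.1.1, e.2)) L W hL (by omega)
  -- ratio property
  have hratio : ∀ k, ∀ ω ∈ nulSub (fun e : (I × Bool) × Y => κ (e.1.1, e.2)) L W k, ∀ i y,
      ω ((i, true), y) * a (i, false) = ω ((i, false), y) * a (i, true) := by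
    intro k ω hω i y
    by_cases hk : κ (i, y) = k
    · obtain ⟨j, hj⟩ := exists_ne y
      have := prop_of_finrank_le_one _ (hone k) ω _ hω (hpr _ (hab j) k)
        ((i, true), y) ((i, false), y)
      simp only [hk, if_true] at this
      have hbn := hb1 j y hj.symm
      apply mul_right_cancel₀ hbn
      linarith
    · rw [hω.1 ((i, true), y) hk, hω.1 ((i, false), y) hk]; simp
  -- Z contains a nonzero row
  have hex : ∃ e ∈ Z, rigRow d p e ≠ 0 := by
    by_contra hno
    push Not at hno
    have hWbot : W = ⊥ := by
      rw [hW, Submodule.span_eq_bot]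
      rintro _ ⟨e, he, rfl⟩
      exact hno e he
    set k := κ (x0.1, y0) with hk
    have hstar : ∀ i y, y ≠ y0 → κ (i, y) ≠ k := by
      intro i y hy hky
      have := prop_of_finrank_le_one _ (hone k) _ _ (hpr _ (hab y0) k) (hpr _ (hab y) k)
        (x0, y0) ((i, true), y)
      simp only [hky, ← hk, if_true, hb0] at this
      have h1 := hb1 y0 y hy
      have h2 := hb1 y y0 hy.symm
      have h3 := ha0 x0
      have h4 := ha0 (i, true)
      simp only [mul_zero] at this
      exact (mul_ne_zero (mul_ne_zero h4 h1) (mul_ne_zero h3 h2)) this.symm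
    have ht := hpr _ (hab y1) k
    have ht2 := ht.2
    rw [hWbot] at ht2
    have ht3 := hdepY _ ht2 x0
    have h1 := dep_zero p hp _ hgY (Finset.univ.erase y0)
      (by rw [Finset.card_erase_of_mem (Finset.mem_univ _), Finset.card_univ]; omega) _ ht3 (by
        intro y hy
        have hy' : y ≠ y0 := by simpa using hy
        simp only [hstar x0.1 y hy', if_false])
    have h2 := congrFun h1 y0
    simp only [← hk, if_true, Pi.zero_apply] at h2
    exact mul_ne_zero (ha0 x0) (hb1 y1 y0 hy01) h2
  obtain ⟨e, heZ, he0⟩ := hex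
  obtain ⟨ωs, hωs, hωL⟩ := hsurj (rigRow d p e) (Submodule.subset_span ⟨e, heZ, rfl⟩)
  set ω := ∑ k, ωs k with hω
  have hωr : ∀ i y, ω ((i, true), y) * a (i, false) = ω ((i, false), y) * a (i, true) := by
    intro i y
    simp only [hω, Finset.sum_apply, Finset.sum_mul]
    exact Finset.sum_congr rfl fun k _ => hratio k _ (hωs k) i y
  by_cases hD : ∃ x y, e = s(g (Sum.inl x), g (Sum.inr y))
  · obtain ⟨⟨i, β⟩, y, rfl⟩ := hD
    have hδ : L (Pi.single ((i, β), y) 1) = rigRow d p s(g (Sum.inl (i, β)), g (Sum.inr y)) := by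
      rw [hLdef, stressMap, Fintype.linearCombination_apply_single, one_smul]
    have hmem : ω - Pi.single ((i, β), y) 1 ∈ LinearMap.ker L := by
      rw [LinearMap.mem_ker, map_sub, hωL, hδ, sub_self]
    have h1 := hkerX _ hmem (i, true) (i, false) y
    have h2 := hωr i y
    have ht := ha0 (i, true)
    have hf := ha0 (i, false)
    cases β
    · simp at h1
      apply ht; linarith
    · simp at h1
      apply hf; linarith
  · induction e using Sym2.ind with
    | _ u v =>
    have huv : u ≠ v := by
      rintro rfl
      apply he0
      funext z
      simp [rigRow]
    push Not at hD
    have := stress_coeff hd p hp g hg hc ω 1 u v huv hD (by rw [one_smul]; exact hωL)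
    exact one_ne_zero this

lemma matching_bound {d : ℕ} {V I Y : Type*} [DecidableEq V] [DecidableEq I] [DecidableEq Y]
    [Fintype V] [Fintype I] [Fintype Y]
    (p : V → Fin d → ℝ) (hp : Generic d p) (g : (I × Bool) ⊕ Y → V) (hg : Function.Injective g)
    (hX : Fintype.card (I × Bool) = d + 2) (hY : Fintype.card Y = d + 3)
    (T : Finset (Sym2 V)) (hT : T.card ≤ rrk d p T) (q0 : I × Y)
    (hq : ∀ x y, (x.1, y) ≠ q0 → s(g (Sum.inl x), g (Sum.inr y)) ∈ T) : False := by
  have hgX : Function.Injective (fun x : I × Bool => g (Sum.inl x)) := hg.comp Sum.inl_injective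
  have hgY : Function.Injective (fun y : Y => g (Sum.inr y)) := hg.comp Sum.inr_injective
  obtain ⟨a, ha, ha0⟩ := exists_a p hp _ hgX hX
  obtain ⟨b, hb, hb0, hb1⟩ := exists_b p hp _ hgY hY q0.2
  have hli : LinearIndependent ℝ (fun e : T => rigRow d p e) := by
    rw [linearIndependent_iff_card_le_finrank_span, Fintype.card_coe]
    refine hT.trans (le_of_eq ?_)
    rw [rrk, Set.finrank]
    have : rigRow d p '' (T : Set (Sym2 V)) = Set.range (fun e : T => rigRow d p e) := by
      ext z; simp
    rw [this]
  let F : {e : (I × Bool) × Y // e.2 ≠ q0.2} → T := fun e =>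
    ⟨s(g (Sum.inl e.1.1), g (Sum.inr e.1.2)), hq _ _ (fun h => e.2 (congrArg Prod.snd h))⟩
  have hF : Function.Injective F := by
    rintro ⟨⟨x, y⟩, h⟩ ⟨⟨x', y'⟩, h'⟩ hh
    have := congrArg Subtype.val hh
    simp only [F, Sym2.eq_iff, hg.eq_iff] at this
    simp at this
    simp [this]
  have hli2 := hli.comp F hF
  rw [Fintype.linearIndependent_iff] at hli2
  have hs := stress_prod p g a b ha hb
  have h0 := hli2 (fun e => a e.1.1 * b e.1.2) (by
    rw [← hs, stressMap, Fintype.linearCombination_apply]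
    symm
    rw [← Finset.sum_subset (Finset.subset_univ (Finset.univ.filter
      (fun e : (I × Bool) × Y => e.2 ≠ q0.2)))]
    · rw [Finset.sum_subtype (p := fun e : (I × Bool) × Y => e.2 ≠ q0.2) _ (by simp)]
      rfl
    · intro e _ he
      have : e.2 = q0.2 := by simpa using he
      rw [this, hb0, mul_zero, zero_smul])
  have : Nontrivial Y := Fintype.one_lt_card_iff_nontrivial.mp (by omega)
  obtain ⟨y, hy⟩ := exists_ne q0.2
  exact mul_ne_zero (ha0 (q0.1, true)) (hb1 y hy) (h0 ⟨((q0.1, true), y), hy⟩)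

/-- Proposition 3.18: `R_{2m}(K_n)` does not have the matroid matching property,
for `m ≥ 2` and `n ≥ 4m+5`. -/
theorem Rd_no_matroid_matching_property (m n : ℕ) (hm : 2 ≤ m) (hn : 4*m + 5 ≤ n)
    (p : Fin n → Fin (2*m) → ℝ) (hp : Generic (2*m) p) :
    ∃ H : Finset (Finset (Sym2 (Fin n))),
      (∀ P ∈ H, P.card = 2 ∧ ∀ e ∈ P, ¬ e.IsDiag) ∧
      (∀ P ∈ H, ∀ Q ∈ H, P ≠ Q → P ∩ Q = ∅) ∧
      ∀ Z : Finset (Sym2 (Fin n)), rcl (2*m) p ↑Z = ↑Z →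
      ∀ t : ℕ, ∀ Hpart : Fin t → Finset (Finset (Sym2 (Fin n))),
        (∀ i j, i ≠ j → Disjoint (Hpart i) (Hpart j)) → Finset.univ.sup Hpart = H →
      ∀ Hm ⊆ H, rrk (2*m) p (⋃ P ∈ (Hm : Set (Finset (Sym2 (Fin n)))), (P : Set (Sym2 (Fin n)))) = 2 * Hm.card →
        Hm.card < rrk (2*m) p ↑Z +
          ∑ i : Fin t,
            (rrk (2*m) p ((Z : Set (Sym2 (Fin n))) ∪
                ⋃ P ∈ ((Hpart i : Finset (Finset (Sym2 (Fin n)))) : Set (Finset (Sym2 (Fin n)))), (P : Set (Sym2 (Fin n)))) -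
              rrk (2*m) p ↑Z) / 2 := by
  have hd : 0 < 2 * m := by omega
  obtain ⟨gE⟩ : Nonempty (((Fin (m + 1) × Bool) ⊕ Fin (2 * m + 3)) ↪ Fin n) :=
    Function.Embedding.nonempty_of_card_le (by simp; omega)
  obtain ⟨g, hg⟩ := gE
  have hX : Fintype.card (Fin (m + 1) × Bool) = 2 * m + 2 := by simp; omega
  have hY : Fintype.card (Fin (2 * m + 3)) = 2 * m + 3 := by simp
  have hc : Fintype.card ((Fin (m + 1) × Bool) ⊕ Fin (2 * m + 3)) < (2 * m + 2).choose 2 := by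
    rw [Fintype.card_sum, hX, hY, Nat.choose_two_right]
    have : (2 * m + 2) * (2 * m + 2 - 1) = ((m + 1) * (2 * m + 1)) * 2 := by
      rw [show 2 * m + 2 - 1 = 2 * m + 1 by omega]; ring
    rw [this, Nat.mul_div_cancel _ (by norm_num)]
    nlinarith
  let ed : (Fin (m + 1) × Bool) → Fin (2 * m + 3) → Sym2 (Fin n) :=
    fun x y => s(g (Sum.inl x), g (Sum.inr y))
  have hed : ∀ x y x' y', ed x y = ed x' y' → x = x' ∧ y = y' := by
    intro x y x' y' h
    simp only [ed, Sym2.eq_iff, hg.eq_iff] at h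
    simpa using h
  let pair : Fin (m + 1) × Fin (2 * m + 3) → Finset (Sym2 (Fin n)) :=
    fun q => {ed (q.1, true) q.2, ed (q.1, false) q.2}
  have hmemp : ∀ q e, e ∈ pair q → ∃ β, e = ed (q.1, β) q.2 := by
    intro q e he
    simp only [pair, Finset.mem_insert, Finset.mem_singleton] at he
    rcases he with h | h
    · exact ⟨_, h⟩
    · exact ⟨_, h⟩
  have hmem2 : ∀ x y, ed x y ∈ pair (x.1, y) := by
    rintro ⟨i, β⟩ y
    cases β <;> simp [pair]
  have hdisj : ∀ q q' e, e ∈ pair q → e ∈ pair q' → q = q' := by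
    intro q q' e h h'
    obtain ⟨β, rfl⟩ := hmemp q e h
    obtain ⟨β', h2⟩ := hmemp q' _ h'
    have := hed _ _ _ _ h2
    exact Prod.ext (Prod.mk.inj this.1).1 this.2
  have hpinj : Function.Injective pair := by
    intro q q' h
    have h1 := hmem2 (q.1, true) q.2
    exact hdisj q q' _ h1 (h ▸ h1)
  have hpcard : ∀ q, (pair q).card = 2 := by
    intro q
    apply Finset.card_pair
    intro h
    simpa using (hed _ _ _ _ h).1
  refine ⟨Finset.univ.image pair, ?_, ?_, ?_⟩
  · intro P hP
    obtain ⟨q, -, rfl⟩ := Finset.mem_image.mp hP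
    refine ⟨hpcard q, fun e he => ?_⟩
    obtain ⟨β, rfl⟩ := hmemp q e he
    simp only [ed, Sym2.mk_isDiag_iff, hg.eq_iff]
    simp
  · intro P hP Q hQ hPQ
    obtain ⟨q, -, rfl⟩ := Finset.mem_image.mp hP
    obtain ⟨q', -, rfl⟩ := Finset.mem_image.mp hQ
    rw [Finset.eq_empty_iff_forall_notMem]
    intro e he
    rw [Finset.mem_inter] at he
    exact hPQ (by rw [hdisj q q' e he.1 he.2])
  intro Z _ t Hpart _ hsup Hm hHm hrk
  -- upper bound on matchings
  have hup : Hm.card + 2 ≤ Fintype.card (Fin (m + 1) × Fin (2 * m + 3)) := by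
    by_contra hlt
    push Not at hlt
    have hcH : (Finset.univ.image pair).card = Fintype.card (Fin (m + 1) × Fin (2 * m + 3)) := by
      rw [Finset.card_image_of_injective _ hpinj, Finset.card_univ]
    have hsd : (Finset.univ.image pair \ Hm).card ≤ 1 := by
      rw [Finset.card_sdiff_of_subset hHm, hcH]; omega
    have hq0 : ∃ q0, ∀ q, q ≠ q0 → pair q ∈ Hm := by
      by_cases hall : ∀ q, pair q ∈ Hm
      · exact ⟨(0, 0), fun q _ => hall q⟩
      · push Not at hall
        obtain ⟨q0, hq0⟩ := hall
        refine ⟨q0, fun q hq => ?_⟩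
        by_contra hqm
        rw [Finset.card_le_one] at hsd
        exact hq (hpinj (hsd (pair q) (by simp [hqm]) (pair q0) (by simp [hq0])))
    obtain ⟨q0, hq0⟩ := hq0
    have hset : (⋃ P ∈ (Hm : Set (Finset (Sym2 (Fin n)))), (P : Set (Sym2 (Fin n)))) =
        ((Hm.biUnion id : Finset (Sym2 (Fin n))) : Set (Sym2 (Fin n))) := by
      ext e; simp
    rw [hset] at hrk
    refine matching_bound p hp g hg hX hY (Hm.biUnion id) ?_ q0 ?_
    · rw [hrk, mul_comm]
      refine Finset.card_biUnion_le_card_mul _ _ _ fun P hP => ?_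
      obtain ⟨q, -, rfl⟩ := Finset.mem_image.mp (hHm hP)
      exact (hpcard q).le
    · intro x y hxy
      rw [Finset.mem_biUnion]
      exact ⟨_, hq0 _ hxy, hmem2 x y⟩
  -- colouring
  have hcol : ∀ q, ∃ k, pair q ∈ Hpart k := by
    intro q
    have : pair q ∈ Finset.univ.sup Hpart := by rw [hsup]; simp
    rw [Finset.mem_sup] at this
    obtain ⟨k, -, hk⟩ := this
    exact ⟨k, hk⟩
  choose κ hκ using hcol
  have hnb := nullity_bound hd p hp g hg hX hY hc κ (Z : Set (Sym2 (Fin n)))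
  have hpart : ∀ k : Fin t, (Finset.univ.filter (fun q => κ q = k)).card ≤
      (rrk (2*m) p ((Z : Set (Sym2 (Fin n))) ∪
        ⋃ P ∈ ((Hpart k : Finset (Finset (Sym2 (Fin n)))) : Set (Finset (Sym2 (Fin n)))),
          (P : Set (Sym2 (Fin n)))) - rrk (2*m) p ↑Z) / 2 +
      (Module.finrank ℝ (nulSub (fun e : (Fin (m + 1) × Bool) × Fin (2 * m + 3) => κ (e.1.1, e.2))
        (stressMap (2 * m) p g)
        (Submodule.span ℝ (rigRow (2 * m) p '' (Z : Set (Sym2 (Fin n))))) k) + 1) / 2 := by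
    intro k
    have h1 := rank_part (fun e : (Fin (m + 1) × Bool) × Fin (2 * m + 3) => κ (e.1.1, e.2))
      (stressMap (2 * m) p g)
      (Submodule.span ℝ (rigRow (2 * m) p '' (Z : Set (Sym2 (Fin n))))) k
    have h2 : Fintype.card {e : (Fin (m + 1) × Bool) × Fin (2 * m + 3) // κ (e.1.1, e.2) = k} =
        (Finset.univ.filter (fun q => κ q = k)).card * 2 := by
      rw [← Fintype.card_subtype]
      refine Eq.trans ?_ ((Fintype.card_prod {q // κ q = k} Bool).trans (by rw [Fintype.card_bool]))
      refine Fintype.card_congr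
        { toFun := fun e => (⟨(e.1.1.1, e.1.2), e.2⟩, e.1.1.2)
          invFun := fun q => ⟨((q.1.1.1, q.2), q.1.1.2), q.1.2⟩
          left_inv := fun _ => rfl
          right_inv := fun _ => rfl }
    rw [h2] at h1
    have h3 : Submodule.span ℝ (rigRow (2 * m) p '' (Z : Set (Sym2 (Fin n)))) ⊔
        (colSub (fun e : (Fin (m + 1) × Bool) × Fin (2 * m + 3) => κ (e.1.1, e.2)) k).map
          (stressMap (2 * m) p g) ≤
        Submodule.span ℝ (rigRow (2 * m) p '' ((Z : Set (Sym2 (Fin n))) ∪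
        ⋃ P ∈ ((Hpart k : Finset (Finset (Sym2 (Fin n)))) : Set (Finset (Sym2 (Fin n)))),
          (P : Set (Sym2 (Fin n))))) := by
      apply sup_le
      · exact Submodule.span_mono (Set.image_mono Set.subset_union_left)
      · rintro _ ⟨ω, hω, rfl⟩
        rw [stressMap, Fintype.linearCombination_apply]
        refine sum_mem fun e _ => ?_
        by_cases he : κ (e.1.1, e.2) = k
        · refine Submodule.smul_mem _ _ (Submodule.subset_span ⟨_, Or.inr ?_, rfl⟩)
          simp only [Set.mem_iUnion]
          refine ⟨pair (e.1.1, e.2), ?_, hmem2 e.1 e.2⟩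
          rw [← he]
          exact hκ _
        · rw [hω e he, zero_smul]
          exact zero_mem _
    have h4 := Submodule.finrank_mono h3
    simp only [rrk]
    omega
  have hsum := Finset.sum_le_sum (fun k (_ : k ∈ (Finset.univ : Finset (Fin t))) => hpart k)
  rw [Finset.sum_add_distrib] at hsum
  have hN : ∑ k, (Finset.univ.filter (fun q => κ q = k)).card =
      Fintype.card (Fin (m + 1) × Fin (2 * m + 3)) := by
    rw [← Finset.card_univ]
    exact (Finset.card_eq_sum_card_fiberwise (fun q _ => Finset.mem_univ (κ q))).symm
  rw [hN] at hsum
  have hZ : rrk (2*m) p (Z : Set (Sym2 (Fin n))) =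
    Module.finrank ℝ (Submodule.span ℝ (rigRow (2 * m) p '' (Z : Set (Sym2 (Fin n))))) := rfl
  rw [← hZ] at hnb
  omega
end

section
/- Let d ≥ 1 and k ≥ 1, let G = (V,D) be a graph with no isolated vertices, let G*v be the cone of G over a new vertex v, and let Y be the set of monochromatic vertices of G (with respect to the principal partition of D, when D is a k-fold R_d-circuit). Then: (a) D is a k-fold R_d-circuit if and only if E(G*v) is a k-fold R_{d+1}-circuit; (b) if D is a k-fold R_d-circuit with principal partition 𝒜 and A_i ∈ 𝒜, then A_i' = A_i ∪ {uv : u ∈ Y and u is incident to an edge of A_i} is a part of the principal partition of the k-fold R_{d+1}-circuit E(G*v). -/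
open scoped BigOperators

/-- Polynomial version of the rigidity row. -/
noncomputable def polyRow (d : ℕ) {V : Type*} [DecidableEq V] (e : Sym2 V) :
    V × Fin d → MvPolynomial (V × Fin d) ℚ :=
  Sym2.lift
    ⟨fun u v wi =>
        (((if wi.1 = u then 1 else 0) - (if wi.1 = v then 1 else 0)) *
          (MvPolynomial.X (u, wi.2) - MvPolynomial.X (v, wi.2))),
      fun u v => by funext wi; ring⟩ e

theorem aeval_polyRow (d : ℕ) {V : Type*} [DecidableEq V] (p : V → Fin d → ℝ) (e : Sym2 V)
    (wi : V × Fin d) :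
    MvPolynomial.aeval (fun vi : V × Fin d => p vi.1 vi.2) (polyRow d e wi) = rigRow d p e wi := by
  induction e using Sym2.ind with
  | _ u v =>
    simp only [polyRow, rigRow, Sym2.lift_mk, map_mul, map_sub, MvPolynomial.aeval_X]
    split_ifs <;> simp

/-- Generic realisations maximise independence. -/
theorem linInd_generic (d : ℕ) {V : Type*} [Fintype V] [DecidableEq V]
    (p p' : V → Fin d → ℝ) (hp : Generic d p) {κ : Type*} [Fintype κ] [DecidableEq κ]
    (a : κ → Sym2 V) (h : LinearIndependent ℝ (fun i => rigRow d p' (a i))) :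
    LinearIndependent ℝ (fun i => rigRow d p (a i)) := by
  let R : Matrix κ (V × Fin d) (MvPolynomial (V × Fin d) ℚ) := Matrix.of fun i => polyRow d (a i)
  let M : (V → Fin d → ℝ) → Matrix κ (V × Fin d) ℝ := fun p => Matrix.of fun i => rigRow d p (a i)
  have key : ∀ p : V → Fin d → ℝ,
      MvPolynomial.aeval (fun vi : V × Fin d => p vi.1 vi.2) (R * R.transpose).det
        = (M p * (M p).transpose).det := by
    intro p
    rw [AlgHom.map_det]
    congr 1
    ext i j
    simp [R, M, Matrix.mul_apply, aeval_polyRow]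
  have h1 : (M p' * (M p').transpose).det ≠ 0 := by
    have hr : (M p' * (M p').transpose).rank = Fintype.card κ := by
      rw [Matrix.rank_self_mul_transpose]
      exact LinearIndependent.rank_matrix h
    have hu : IsUnit (M p' * (M p').transpose) := by
      rw [← Matrix.linearIndependent_rows_iff_isUnit, linearIndependent_iff_card_eq_finrank_span,
        ← hr, Matrix.rank_eq_finrank_span_row]
      rfl
    exact ((Matrix.isUnit_iff_isUnit_det _).1 hu).ne_zero
  have h2 : (R * R.transpose).det ≠ 0 := by
    intro h0
    apply h1
    rw [← key, h0, map_zero]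
  have h3 : (M p * (M p).transpose).det ≠ 0 := by
    rw [← key]
    intro h0
    exact h2 (hp (by rw [h0, map_zero]))
  have hu := (Matrix.isUnit_iff_isUnit_det _).2 (isUnit_iff_ne_zero.2 h3)
  have hr := Matrix.rank_of_isUnit _ hu
  rw [Matrix.rank_self_mul_transpose, Matrix.rank_eq_finrank_span_row] at hr
  exact linearIndependent_iff_card_eq_finrank_span.2 hr.symm

theorem rrk_le_generic (d : ℕ) {V : Type*} [Fintype V] [DecidableEq V]
    (p p' : V → Fin d → ℝ) (hp : Generic d p) (F : Set (Sym2 V)) :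
    rrk d p' F ≤ rrk d p F := by
  classical
  obtain ⟨κ, a, ha, hs, hl⟩ := exists_linearIndependent' ℝ (fun e : F => rigRow d p' e)
  have : Finite κ := Finite.of_injective a ha
  have := Fintype.ofFinite κ
  have h2 := linInd_generic d p p' hp (fun i => (a i : Sym2 V)) hl
  have e1 := finrank_span_eq_card hl
  have e2 := finrank_span_eq_card h2
  rw [hs] at e1
  have e3 : Set.range (fun e : F => rigRow d p' e) = rigRow d p' '' F := by
    ext; simp
  rw [e3] at e1
  unfold rrk
  rw [e1, ← e2]
  apply Submodule.finrank_mono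
  apply Submodule.span_mono
  rintro _ ⟨i, rfl⟩
  exact ⟨a i, (a i).2, rfl⟩

/-- Height of vertex `u` over the cone vertex. -/
def coneH {d : ℕ} {V : Type*} (q : Option V → Fin (d+1) → ℝ) (u : V) : ℝ :=
  q (some u) (Fin.last d) - q none (Fin.last d)

/-- The central projection. -/
noncomputable def conePt {d : ℕ} {V : Type*} (q : Option V → Fin (d+1) → ℝ) (u : V) (i : Fin d) : ℝ :=
  (q (some u) i.castSucc - q none i.castSucc) / coneH q u

/-- Column operations. -/
def coneP {d : ℕ} {V : Type*} (q : Option V → Fin (d+1) → ℝ) :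
    (Option V × Fin (d+1) → ℝ) →ₗ[ℝ] (V × Fin d → ℝ) where
  toFun y ui := coneH q ui.1 * y (some ui.1, ui.2.castSucc)
    - (q (some ui.1) ui.2.castSucc - q none ui.2.castSucc) * y (some ui.1, Fin.last d)
  map_add' y z := by funext ui; simp; ring
  map_smul' c z := by funext ui; simp; ring

theorem coneP_edge {d : ℕ} {V : Type*} [DecidableEq V] (q : Option V → Fin (d+1) → ℝ)
    (h : ∀ u, coneH q u ≠ 0) (e : Sym2 V) :
    ∃ c : ℝ, c ≠ 0 ∧
      coneP q (rigRow (d+1) q (Sym2.map some e)) = c • rigRow d (conePt q) e := by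
  induction e using Sym2.ind with
  | _ u v =>
    refine ⟨coneH q u * coneH q v, mul_ne_zero (h u) (h v), ?_⟩
    funext ⟨w, i⟩
    have hu := h u
    have hv := h v
    simp only [coneP, rigRow, Sym2.map_mk, Sym2.lift_mk, LinearMap.coe_mk, AddHom.coe_mk,
      Pi.smul_apply, smul_eq_mul, conePt, Option.some_inj]
    by_cases h1 : w = u <;> by_cases h2 : w = v
    · subst h1; subst h2; simp
    · subst h1
      simp only [h2, if_true, if_false]
      field_simp
      simp only [coneH]
      ring
    · subst h2
      simp only [h1, if_true, if_false]
      field_simp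
      simp only [coneH]
      ring
    · simp [h1, h2]

theorem coneP_cone {d : ℕ} {V : Type*} [DecidableEq V] (q : Option V → Fin (d+1) → ℝ) (u : V) :
    coneP q (rigRow (d+1) q s(some u, none)) = 0 := by
  funext ⟨w, i⟩
  simp only [coneP, rigRow, Sym2.lift_mk, LinearMap.coe_mk, AddHom.coe_mk, Option.some_inj]
  by_cases h1 : w = u
  · subst h1
    simp [coneH]
    ring
  · simp [h1]

theorem coneRow_some {d : ℕ} {V : Type*} [DecidableEq V] (q : Option V → Fin (d+1) → ℝ) (u w : V)
    (i : Fin (d+1)) :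
    rigRow (d+1) q s(some u, none) (some w, i) =
      if w = u then q (some u) i - q none i else 0 := by
  simp only [rigRow, Sym2.lift_mk, Option.some_inj]
  split_ifs <;> simp_all

theorem rigRow_sum {d : ℕ} {V : Type*} [Fintype V] [DecidableEq V] (p : V → Fin d → ℝ)
    (e : Sym2 V) (i : Fin d) : ∑ w, rigRow d p e (w, i) = 0 := by
  induction e using Sym2.ind with
  | _ u v =>
    simp only [rigRow, Sym2.lift_mk, ← Finset.sum_mul, Finset.sum_sub_distrib]
    simp

theorem rigRow_supp {d : ℕ} {V : Type*} [DecidableEq V] (p : V → Fin d → ℝ)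
    (e : Sym2 V) (w : V) (hw : w ∉ e) (i : Fin d) : rigRow d p e (w, i) = 0 := by
  induction e using Sym2.ind with
  | _ u v =>
    simp only [Sym2.mem_iff, not_or] at hw
    simp [rigRow, hw.1, hw.2]

/-- Partial cone. -/
def coneOn {V : Type*} [DecidableEq V] (F : Finset (Sym2 V)) (W : Finset V) :
    Finset (Sym2 (Option V)) :=
  F.image (Sym2.map Option.some) ∪ W.image fun u : V => s((Option.some u : Option V), (none : Option V))

theorem mem_coneOn {V : Type*} [DecidableEq V] {F : Finset (Sym2 V)} {W : Finset V}
    {e : Sym2 (Option V)} : e ∈ coneOn F W ↔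
      (∃ f ∈ F, Sym2.map some f = e) ∨ ∃ u ∈ W, s(some u, none) = e := by
  simp [coneOn]

theorem cone_ker {d : ℕ} {V : Type*} [Fintype V] [DecidableEq V] (q : Option V → Fin (d+1) → ℝ)
    (h : ∀ u, coneH q u ≠ 0) (F : Finset (Sym2 V)) (W : Finset V) (hW : esupp F ⊆ W)
    (y : Option V × Fin (d+1) → ℝ)
    (hy : y ∈ Submodule.span ℝ (rigRow (d+1) q '' (coneOn F W : Set (Sym2 (Option V)))))
    (hP : coneP q y = 0) :
    y = ∑ u ∈ W, (y (some u, Fin.last d) / coneH q u) • rigRow (d+1) q s(some u, none) := by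
  have hsum : ∀ i, ∑ w, y (w, i) = 0 := by
    intro i
    clear hP
    induction hy using Submodule.span_induction with
    | mem x hx => obtain ⟨e, -, rfl⟩ := hx; exact rigRow_sum q e i
    | zero => simp
    | add x y _ _ hx hy =>
      simp only [Pi.add_apply, Finset.sum_add_distrib, hx, hy, add_zero]
    | smul c x _ hx =>
      simp only [Pi.smul_apply, smul_eq_mul, ← Finset.mul_sum, hx, mul_zero]
  have hsupp : ∀ u ∉ W, ∀ i, y (some u, i) = 0 := by
    intro u hu i
    clear hP hsum
    induction hy using Submodule.span_induction with
    | mem x hx =>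
      obtain ⟨e, he, rfl⟩ := hx
      apply rigRow_supp
      intro hue
      rcases mem_coneOn.1 he with ⟨f, hf, rfl⟩ | ⟨w, hw, rfl⟩
      · rw [Sym2.mem_map] at hue
        obtain ⟨a, ha, hau⟩ := hue
        rw [Option.some_inj] at hau
        subst hau
        exact hu (hW (by simp only [esupp, Finset.mem_filter, Finset.mem_univ, true_and]; exact ⟨f, hf, ha⟩))
      · simp at hue
        subst hue
        exact hu hw
    | zero => simp
    | add x y _ _ hx hy => simp [hx, hy]
    | smul c x _ hx => simp [hx]
  have hsome : ∀ u i, y (some u, i) = y (some u, Fin.last d) / coneH q u * (q (some u) i - q none i) := by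
    intro u i
    have hu := h u
    refine Fin.lastCases ?_ (fun i => ?_) i
    · change _ = _ / _ * coneH q u
      field_simp
    · have := congrFun hP (u, i)
      simp only [coneP, LinearMap.coe_mk, AddHom.coe_mk, Pi.zero_apply] at this
      field_simp
      linarith
  set z := ∑ u ∈ W, (y (some u, Fin.last d) / coneH q u) • rigRow (d+1) q s(some u, none) with hz
  have hzs : ∀ u i, y (some u, i) = z (some u, i) := by
    intro u i
    simp only [hz, Finset.sum_apply, Pi.smul_apply, coneRow_some, smul_eq_mul, mul_ite, mul_zero]
    rw [Finset.sum_ite_eq]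
    split_ifs with hu
    · exact hsome u i
    · exact hsupp u hu i
  have hzsum : ∀ i, ∑ w, z (w, i) = 0 := by
    intro i
    simp only [hz, Finset.sum_apply, Pi.smul_apply, smul_eq_mul]
    rw [Finset.sum_comm]
    simp only [← Finset.mul_sum, rigRow_sum]
    simp
  funext ⟨w, i⟩
  cases w with
  | some u => exact hzs u i
  | none =>
    have a := hsum i
    have b := hzsum i
    rw [Fintype.sum_option] at a b
    simp only [hzs] at a
    linarith

theorem coneP_map {d : ℕ} {V : Type*} [Fintype V] [DecidableEq V] (q : Option V → Fin (d+1) → ℝ)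
    (h : ∀ u, coneH q u ≠ 0) (F : Finset (Sym2 V)) (W : Finset V) :
    (Submodule.span ℝ (rigRow (d+1) q '' (coneOn F W : Set (Sym2 (Option V))))).map (coneP q)
      = Submodule.span ℝ (rigRow d (conePt q) '' (F : Set (Sym2 V))) := by
  rw [Submodule.map_span]
  apply le_antisymm
  · rw [Submodule.span_le]
    rintro _ ⟨_, ⟨e, he, rfl⟩, rfl⟩
    rcases mem_coneOn.1 he with ⟨f, hf, rfl⟩ | ⟨w, hw, rfl⟩
    · obtain ⟨c, hc, h1⟩ := coneP_edge q h f
      rw [h1]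
      exact Submodule.smul_mem _ _ (Submodule.subset_span ⟨f, hf, rfl⟩)
    · rw [coneP_cone]
      exact Submodule.zero_mem _
  · rw [Submodule.span_le]
    rintro _ ⟨f, hf, rfl⟩
    obtain ⟨c, hc, h1⟩ := coneP_edge q h f
    have : rigRow d (conePt q) f = c⁻¹ • coneP q (rigRow (d+1) q (Sym2.map some f)) := by
      rw [h1, smul_smul, inv_mul_cancel₀ hc, one_smul]
    rw [this]
    exact Submodule.smul_mem _ _ (Submodule.subset_span
      ⟨_, ⟨_, mem_coneOn.2 (Or.inl ⟨f, hf, rfl⟩), rfl⟩, rfl⟩)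

theorem cone_rank {d : ℕ} {V : Type*} [Fintype V] [DecidableEq V] (q : Option V → Fin (d+1) → ℝ)
    (h : ∀ u, coneH q u ≠ 0) (F : Finset (Sym2 V)) (W : Finset V) (hW : esupp F ⊆ W) :
    rrk (d+1) q (coneOn F W) = rrk d (conePt q) F + W.card := by
  set S := Submodule.span ℝ (rigRow (d+1) q '' (coneOn F W : Set (Sym2 (Option V)))) with hS
  have h1 := LinearMap.finrank_range_add_finrank_ker ((coneP q).domRestrict S)
  rw [LinearMap.range_domRestrict, hS, coneP_map q h F W, ← hS] at h1
  let b : W → (Option V × Fin (d+1) → ℝ) := fun u => rigRow (d+1) q s(some (u : V), none)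
  have hb : LinearIndependent ℝ b := by
    rw [Fintype.linearIndependent_iff]
    intro g hg u
    have := congrFun hg (some u.1, Fin.last d)
    simp only [b, Finset.sum_apply, Pi.smul_apply, coneRow_some, smul_eq_mul, mul_ite, mul_zero,
      Pi.zero_apply, Subtype.coe_inj] at this
    rw [Finset.sum_ite_eq] at this
    simp only [Finset.mem_univ, if_true] at this
    exact (mul_eq_zero.1 this).resolve_right (h u)
  have h2 : (LinearMap.ker ((coneP q).domRestrict S)).map S.subtype
      = Submodule.span ℝ (Set.range b) := by
    apply le_antisymm
    · rintro _ ⟨⟨y, hy⟩, hk, rfl⟩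
      have hk' : coneP q y = 0 := by simpa using hk
      have := cone_ker q h F W hW y hy hk'
      simp only [Submodule.subtype_apply]
      rw [this]
      refine Submodule.sum_mem _ fun u hu => Submodule.smul_mem _ _ (Submodule.subset_span ?_)
      exact ⟨⟨u, hu⟩, rfl⟩
    · rw [Submodule.span_le]
      rintro _ ⟨u, rfl⟩
      refine ⟨⟨b u, Submodule.subset_span ⟨_, mem_coneOn.2 (Or.inr ⟨u, u.2, rfl⟩), rfl⟩⟩, ?_, rfl⟩
      simp [b, coneP_cone]
  have h3 : Module.finrank ℝ (LinearMap.ker ((coneP q).domRestrict S)) = W.card := by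
    rw [← Submodule.finrank_map_subtype_eq, h2, finrank_span_eq_card hb]
    simp
  unfold rrk
  rw [← hS, ← h1, h3]

theorem rrk_mono {d : ℕ} {V : Type*} [Fintype V] [DecidableEq V] (p : V → Fin d → ℝ)
    {F G : Set (Sym2 V)} (h : F ⊆ G) : rrk d p F ≤ rrk d p G :=
  Submodule.finrank_mono (Submodule.span_mono (Set.image_mono h))

theorem mem_span_of_rrk {d : ℕ} {V : Type*} [Fintype V] [DecidableEq V] (p : V → Fin d → ℝ)
    {F : Set (Sym2 V)} {f : Sym2 V} (hf : f ∈ F) (h : rrk d p (F \ {f}) = rrk d p F) :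
    rigRow d p f ∈ Submodule.span ℝ (rigRow d p '' (F \ {f})) := by
  have := Submodule.eq_of_le_of_finrank_eq
    (Submodule.span_mono (R := ℝ) (Set.image_mono (f := rigRow d p) (Set.sdiff_subset (s := F) (t := {f})))) h
  rw [this]
  exact Submodule.subset_span ⟨f, hf, rfl⟩

theorem rrk_of_mem_span {d : ℕ} {V : Type*} [Fintype V] [DecidableEq V] (p : V → Fin d → ℝ)
    {F : Set (Sym2 V)} {f : Sym2 V}
    (h : rigRow d p f ∈ Submodule.span ℝ (rigRow d p '' (F \ {f}))) :
    rrk d p (F \ {f}) = rrk d p F := by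
  apply le_antisymm (rrk_mono p Set.sdiff_subset)
  apply Submodule.finrank_mono
  rw [Submodule.span_le]
  rintro _ ⟨e, he, rfl⟩
  by_cases hef : e = f
  · rw [hef]; exact h
  · exact Submodule.subset_span ⟨e, ⟨he, hef⟩, rfl⟩

/-- A lift of a realisation to the cone. -/
def coneLift {d : ℕ} {V : Type*} (p : V → Fin d → ℝ) (lam : V → ℝ) :
    Option V → Fin (d+1) → ℝ
  | none => 0
  | some u => Fin.snoc (fun i => lam u * p u i) (lam u)

theorem coneH_lift {d : ℕ} {V : Type*} (p : V → Fin d → ℝ) (lam : V → ℝ) (u : V) :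
    coneH (coneLift p lam) u = lam u := by
  simp [coneH, coneLift]

theorem conePt_lift {d : ℕ} {V : Type*} (p : V → Fin d → ℝ) (lam : V → ℝ) (h : ∀ u, lam u ≠ 0) :
    conePt (coneLift p lam) = p := by
  funext u i
  have := h u
  rw [conePt, coneH_lift]
  simp [coneLift]
  field_simp

theorem coneH_generic {d : ℕ} {V : Type*} (q : Option V → Fin (d+1) → ℝ)
    (hq : Generic (d+1) q) (u : V) : coneH q u ≠ 0 := by
  intro h
  have := AlgebraicIndependent.injective hq
    (a₁ := (some u, Fin.last d)) (a₂ := (none, Fin.last d)) (sub_eq_zero.1 h)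
  simp at this

theorem cone_rank_generic {d : ℕ} {V : Type*} [Fintype V] [DecidableEq V]
    (p : V → Fin d → ℝ) (hp : Generic d p)
    (q : Option V → Fin (d+1) → ℝ) (hq : Generic (d+1) q)
    (F : Finset (Sym2 V)) (W : Finset V) (hW : esupp F ⊆ W) :
    rrk (d+1) q (coneOn F W) = rrk d p F + W.card := by
  apply le_antisymm
  · rw [cone_rank q (coneH_generic q hq) F W hW]
    exact Nat.add_le_add_right (rrk_le_generic d p _ hp _) _
  · have h1 : ∀ u : V, (fun _ : V => (1 : ℝ)) u ≠ 0 := fun _ => one_ne_zero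
    have := cone_rank (coneLift p fun _ => 1) (fun u => by rw [coneH_lift]; exact one_ne_zero) F W hW
    rw [conePt_lift p _ h1] at this
    rw [← this]
    exact rrk_le_generic _ _ _ hq _

theorem cone_del {d : ℕ} {V : Type*} [Fintype V] [DecidableEq V]
    (p : V → Fin d → ℝ) (hp : Generic d p)
    (q : Option V → Fin (d+1) → ℝ) (hq : Generic (d+1) q)
    (F : Finset (Sym2 V)) (W : Finset V) (hW : esupp F ⊆ W) (u w : V) (huw : u ≠ w)
    (hf : s(u, w) ∈ F) (hr : rrk d p (↑F \ {s(u, w)}) = rrk d p ↑F) :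
    rrk (d+1) q (↑(coneOn F W) \ {s(some u, none)}) = rrk (d+1) q ↑(coneOn F W) := by
  apply le_antisymm (rrk_mono q Set.sdiff_subset)
  let lam : V → ℝ := fun t => if t = w then 2 else 1
  have hlam : ∀ t, lam t ≠ 0 := by intro t; simp only [lam]; split_ifs <;> norm_num
  set q' := coneLift p lam with hq'
  have hH : ∀ t, coneH q' t ≠ 0 := fun t => by rw [hq', coneH_lift]; exact hlam t
  have hpt : conePt q' = p := conePt_lift p lam hlam
  have e1 := cone_rank_generic p hp q hq F W hW
  have e2 := cone_rank q' hH F W hW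
  rw [hpt] at e2
  rw [e1, ← e2]
  refine le_trans (le_of_eq ?_) (rrk_le_generic _ q q' hq _)
  symm
  apply rrk_of_mem_span
  set S := Submodule.span ℝ (rigRow (d+1) q' '' (↑(coneOn F W) \ {s(some u, none)})) with hS
  have hFS : ∀ e ∈ F, rigRow (d+1) q' (Sym2.map some e) ∈ S := by
    intro e he
    refine Submodule.subset_span ⟨_, ⟨mem_coneOn.2 (Or.inl ⟨e, he, rfl⟩), ?_⟩, rfl⟩
    intro h
    have h' : (none : Option V) ∈ Sym2.map some e := by
      rw [Set.mem_singleton_iff.1 h]; simp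
    rw [Sym2.mem_map] at h'
    obtain ⟨a, -, ha⟩ := h'
    simp at ha
  have hm := mem_span_of_rrk p (F := (F : Set (Sym2 V))) hf hr
  have hmap := coneP_map q' hH (F.erase s(u, w)) ∅
  rw [hpt, Finset.coe_erase] at hmap
  obtain ⟨c, hc, hPf⟩ := coneP_edge q' hH s(u, w)
  rw [hpt] at hPf
  have hm2 := Submodule.smul_mem _ c hm
  rw [← hPf, ← hmap] at hm2
  obtain ⟨z, hz, hPz⟩ := hm2
  have hzS : z ∈ S ∧ z (some u, Fin.last d) = 0 := by
    clear hPz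
    induction hz using Submodule.span_induction with
    | mem x hx =>
      obtain ⟨e, he, rfl⟩ := hx
      rcases mem_coneOn.1 he with ⟨f, hf', rfl⟩ | ⟨t, ht, -⟩
      · rw [Finset.mem_erase] at hf'
        refine ⟨hFS f hf'.2, ?_⟩
        by_cases huf : u ∈ f
        · obtain ⟨t, rfl⟩ := huf
          have htw : t ≠ w := fun h => hf'.1 (by rw [h])
          simp [rigRow, hq', coneLift, lam, htw, huw]
        · apply rigRow_supp
          intro h
          rw [Sym2.mem_map] at h
          obtain ⟨a, ha, hau⟩ := h
          rw [Option.some_inj] at hau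
          exact huf (hau ▸ ha)
      · simp at ht
    | zero => simp
    | add x y _ _ hx hy => exact ⟨S.add_mem hx.1 hy.1, by simp [hx.2, hy.2]⟩
    | smul a x _ hx => exact ⟨S.smul_mem a hx.1, by simp [hx.2]⟩
  set y := rigRow (d+1) q' (Sym2.map some s(u, w)) - z with hy
  have hyS : y ∈ S := S.sub_mem (hFS _ hf) hzS.1
  have hyP : coneP q' y = 0 := by rw [hy, map_sub, hPz, sub_self]
  have hyu : y (some u, Fin.last d) ≠ 0 := by
    rw [hy, Pi.sub_apply, hzS.2]
    simp [rigRow, hq', coneLift, lam, huw]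
    norm_num
  have huW : u ∈ W := hW (by
    simp only [esupp, Finset.mem_filter, Finset.mem_univ, true_and]
    exact ⟨_, hf, by simp⟩)
  have hk := cone_ker q' hH F W hW y (Submodule.span_mono (Set.image_mono Set.sdiff_subset) hyS) hyP
  rw [← Finset.add_sum_erase W _ huW] at hk
  have hcu : y (some u, Fin.last d) / coneH q' u ≠ 0 := div_ne_zero hyu (hH u)
  have hrest : (∑ t ∈ W.erase u, (y (some t, Fin.last d) / coneH q' t) •
      rigRow (d+1) q' s(some t, none)) ∈ S := by
    refine S.sum_mem fun t ht => S.smul_mem _ (Submodule.subset_span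
      ⟨_, ⟨mem_coneOn.2 (Or.inr ⟨t, Finset.mem_of_mem_erase ht, rfl⟩), ?_⟩, rfl⟩)
    have := Finset.ne_of_mem_erase ht
    simp [this]
  have h5 : (y (some u, Fin.last d) / coneH q' u) • rigRow (d+1) q' s(some u, none) ∈ S := by
    have := S.sub_mem hyS hrest
    rwa [sub_eq_of_eq_add hk] at this
  exact (Submodule.smul_mem_iff _ hcu).1 h5

theorem some_inj2 {V : Type*} : Function.Injective (Sym2.map (some : V → Option V)) :=
  Sym2.map.injective (Option.some_injective V)

theorem map_ne_cone {V : Type*} (f : Sym2 V) (u : V) : Sym2.map some f ≠ s(some u, none) := by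
  intro h
  have h' : (none : Option V) ∈ Sym2.map some f := by rw [h]; simp
  rw [Sym2.mem_map] at h'
  obtain ⟨a, -, ha⟩ := h'
  simp at ha

theorem coneOn_card {V : Type*} [DecidableEq V] (F : Finset (Sym2 V)) (W : Finset V) :
    (coneOn F W).card = F.card + W.card := by
  rw [coneOn, Finset.card_union_of_disjoint, Finset.card_image_of_injective _ some_inj2,
    Finset.card_image_of_injective]
  · intro a b h; simpa using h
  · rw [Finset.disjoint_left]
    intro e h1 h2
    simp only [Finset.mem_image] at h1 h2
    obtain ⟨f, -, rfl⟩ := h1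
    obtain ⟨u, -, h⟩ := h2
    exact map_ne_cone f u h.symm

theorem coneOn_diff {V : Type*} [DecidableEq V] (F : Finset (Sym2 V)) (W : Finset V) (f : Sym2 V) :
    (↑(coneOn F W) \ {Sym2.map some f} : Set (Sym2 (Option V))) = ↑(coneOn (F.erase f) W) := by
  ext e
  simp only [Set.mem_sdiff, Finset.mem_coe, mem_coneOn, Set.mem_singleton_iff, Finset.mem_erase]
  constructor
  · rintro ⟨⟨g, hg, rfl⟩ | h, hne⟩
    · exact Or.inl ⟨g, ⟨fun h => hne (by rw [h]), hg⟩, rfl⟩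
    · exact Or.inr h
  · rintro (⟨g, ⟨hg1, hg⟩, rfl⟩ | ⟨u, hu, rfl⟩)
    · exact ⟨Or.inl ⟨g, hg, rfl⟩, fun h => hg1 (some_inj2 h)⟩
    · exact ⟨Or.inr ⟨u, hu, rfl⟩, fun h => map_ne_cone _ _ h.symm⟩

theorem esupp_erase {V : Type*} [Fintype V] [DecidableEq V] (F : Finset (Sym2 V)) (f : Sym2 V) :
    esupp (F.erase f) ⊆ esupp F := by
  intro w
  simp only [esupp, Finset.mem_filter, Finset.mem_univ, true_and]
  rintro ⟨e, he, h⟩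
  exact ⟨e, Finset.mem_of_mem_erase he, h⟩

theorem cone_kfold {d k : ℕ} {V : Type*} [Fintype V] [DecidableEq V]
    (p : V → Fin d → ℝ) (hp : Generic d p)
    (q : Option V → Fin (d+1) → ℝ) (hq : Generic (d+1) q)
    (F : Finset (Sym2 V)) (hs : ∀ e ∈ F, ¬ e.IsDiag) :
    IsKFoldCircuit d p F k ↔ IsKFoldCircuit (d+1) q (coneOn F (esupp F)) k := by
  have hr := cone_rank_generic p hp q hq F (esupp F) subset_rfl
  have hre := fun f => cone_rank_generic p hp q hq (F.erase f) (esupp F) (esupp_erase F f)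
  have hcard := coneOn_card F (esupp F)
  constructor
  · rintro ⟨h1, h2⟩
    refine ⟨fun e he => ?_, by omega⟩
    rcases mem_coneOn.1 he with ⟨f, hf, rfl⟩ | ⟨u, hu, rfl⟩
    · rw [coneOn_diff, hre, hr, Finset.coe_erase, h1 f hf]
    · have hu' := hu
      simp only [esupp, Finset.mem_filter, Finset.mem_univ, true_and] at hu'
      obtain ⟨f, hf, w, rfl⟩ := hu'
      exact cone_del p hp q hq F _ subset_rfl u w (fun h => hs _ hf (by simp [h])) hf (h1 _ hf)
  · rintro ⟨h1, h2⟩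
    refine ⟨fun f hf => ?_, by omega⟩
    have := h1 _ (mem_coneOn.2 (Or.inl ⟨f, hf, rfl⟩))
    rw [coneOn_diff, hre, hr, Finset.coe_erase] at this
    omega

theorem rrk_union_le {d : ℕ} {V : Type*} [Fintype V] [DecidableEq V] (p : V → Fin d → ℝ)
    (B C : Finset (Sym2 V)) (h : B ⊆ C) : rrk d p C ≤ rrk d p B + (C \ B).card := by
  have h1 : (C : Set (Sym2 V)) = ↑B ∪ ↑(C \ B) := by
    rw [← Finset.coe_union, Finset.union_sdiff_of_subset h]
  unfold rrk
  rw [h1, Set.image_union, Submodule.span_union]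
  refine (Submodule.finrank_add_le_finrank_add_finrank _ _).trans ?_
  refine Nat.add_le_add_left ?_ _
  rw [← Finset.coe_image]
  exact (finrank_span_finset_le_card _).trans Finset.card_image_le

theorem part_sub {d k : ℕ} (hk : 1 ≤ k) {V : Type*} [Fintype V] [DecidableEq V]
    (p : V → Fin d → ℝ) (D B₁ B₂ : Finset (Sym2 V)) (hD : IsKFoldCircuit d p D k)
    (h1 : B₁ ⊆ D) (h2 : B₂ ⊆ D) (hB1 : IsKFoldCircuit d p B₁ (k-1))
    (hB2 : IsKFoldCircuit d p B₂ (k-1)) (e : Sym2 V) (heD : e ∈ D) (he1 : e ∉ B₁) (he2 : e ∉ B₂) :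
    B₂ ⊆ B₁ := by
  intro f hf2
  by_contra hf1
  have hfe : f ≠ e := fun h => he2 (h ▸ hf2)
  have r1 := hD.1 e heD
  have r2 := hD.2
  have hsub : B₁ ⊆ (D.erase e).erase f := by
    intro x hx
    rw [Finset.mem_erase, Finset.mem_erase]
    exact ⟨fun h => hf1 (h ▸ hx), fun h => he1 (h ▸ hx), h1 hx⟩
  have r3 := rrk_union_le p B₁ _ hsub
  have c1 := Finset.card_sdiff_add_card_eq_card hsub
  have c2 := Finset.card_erase_add_one (Finset.mem_erase.2 ⟨hfe, h2 hf2⟩)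
  have c3 := Finset.card_erase_add_one heD
  have r4 := hB1.2
  have r5 : rrk d p (↑(D.erase e) \ {f}) = rrk d p ↑(D.erase e) := by
    apply rrk_of_mem_span
    have hm := mem_span_of_rrk p (F := (B₂ : Set (Sym2 V))) (Finset.mem_coe.2 hf2) (hB2.1 f hf2)
    have hss : (↑B₂ \ {f} : Set (Sym2 V)) ⊆ ↑(D.erase e) \ {f} := by
      rintro x ⟨hx, hxf⟩
      exact ⟨Finset.mem_coe.2 (Finset.mem_erase.2 ⟨fun h => he2 (h ▸ hx), h2 hx⟩), hxf⟩
    exact Submodule.span_mono (Set.image_mono hss) hm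
  rw [← Finset.coe_erase] at r5 r1
  omega

/-- Lemma 4.1: coning preserves `k`-fold circuits, and every part of the principal
partition extends to a part of the principal partition of the cone by adding the
cone edges at the monochromatic vertices of that part. -/
theorem cone_kfold_circuit_and_principal_parts
    (d k : ℕ) (hd : 1 ≤ d) (hk : 1 ≤ k)
    {V : Type*} [Fintype V] [DecidableEq V]
    (D : Finset (Sym2 V)) (hsimple : ∀ e ∈ D, ¬ e.IsDiag)
    (hcov : ∀ w : V, ∃ e ∈ D, w ∈ e)
    (p : V → Fin d → ℝ) (hp : Generic d p)
    (q : Option V → Fin (d+1) → ℝ) (hq : Generic (d+1) q) :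
    (IsKFoldCircuit d p D k ↔ IsKFoldCircuit (d+1) q (coneEdges D) k) ∧
    (IsKFoldCircuit d p D k →
      ∀ A : Finset (Sym2 V), IsPrincipalPart d p D k A →
      ∀ A' : Finset (Sym2 (Option V)),
        (∀ e' : Sym2 (Option V), e' ∈ A' ↔
          ((∃ f ∈ A, e' = Sym2.map Option.some f) ∨
            ∃ u : V, Monochromatic d p D k u ∧ (∃ f ∈ A, u ∈ f) ∧
              e' = s((Option.some u : Option V), (none : Option V)))) →
        IsPrincipalPart (d+1) q (coneEdges D) k A') := by
  have hes : esupp D = Finset.univ := by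
    ext w
    simp only [esupp, Finset.mem_filter, Finset.mem_univ, true_and, iff_true]
    exact hcov w
  have hcone : coneEdges D = coneOn D (esupp D) := by rw [hes]; rfl
  refine ⟨by rw [hcone]; exact cone_kfold p hp q hq D hsimple, ?_⟩
  rintro hD A ⟨B, hBD, hB, rfl⟩ A' hA'
  have hY : ∀ u : V, (Monochromatic d p D k u ∧ ∃ f ∈ D \ B, u ∈ f) ↔ u ∉ esupp B := by
    intro u
    simp only [esupp, Finset.mem_filter, Finset.mem_univ, true_and]
    constructor
    · rintro ⟨⟨_, ⟨B₂, hB₂D, hB₂, rfl⟩, hm⟩, f, hf, huf⟩ ⟨g, hg, hug⟩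
      rw [Finset.mem_sdiff] at hf
      have hf2 := Finset.mem_sdiff.1 (hm f hf.1 huf)
      have hg2 := Finset.mem_sdiff.1 (hm g (hBD hg) hug)
      exact hg2.2 (part_sub hk p D B₂ B hD hB₂D hBD hB₂ hB f hf.1 hf2.2 hf.2 hg)
    · intro h
      obtain ⟨f, hf, huf⟩ := hcov u
      refine ⟨⟨D \ B, ⟨B, hBD, hB, rfl⟩, fun e he hue => ?_⟩, f, ?_, huf⟩
      · exact Finset.mem_sdiff.2 ⟨he, fun heB => h ⟨e, heB, hue⟩⟩
      · exact Finset.mem_sdiff.2 ⟨hf, fun heB => h ⟨f, heB, huf⟩⟩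
  have hsub : coneOn B (esupp B) ⊆ coneEdges D := by
    intro e he
    rw [hcone, mem_coneOn, hes]
    rcases mem_coneOn.1 he with ⟨f, hf, rfl⟩ | ⟨u, hu, rfl⟩
    · exact Or.inl ⟨f, hBD hf, rfl⟩
    · exact Or.inr ⟨u, Finset.mem_univ _, rfl⟩
  refine ⟨coneOn B (esupp B), hsub,
    (cone_kfold p hp q hq B fun e he => hsimple e (hBD he)).1 hB, ?_⟩
  ext e
  rw [hA', Finset.mem_sdiff, hcone, hes]
  constructor
  · rintro (⟨f, hf, rfl⟩ | ⟨u, hm, hf, rfl⟩)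
    · rw [Finset.mem_sdiff] at hf
      refine ⟨mem_coneOn.2 (Or.inl ⟨f, hf.1, rfl⟩), fun h => ?_⟩
      rcases mem_coneOn.1 h with ⟨g, hg, hgf⟩ | ⟨w, -, hw⟩
      · exact hf.2 (some_inj2 hgf ▸ hg)
      · exact map_ne_cone _ _ hw.symm
    · have hu := (hY u).1 ⟨hm, hf⟩
      refine ⟨mem_coneOn.2 (Or.inr ⟨u, Finset.mem_univ _, rfl⟩), fun h => ?_⟩
      rcases mem_coneOn.1 h with ⟨g, hg, hgf⟩ | ⟨w, hw, hwu⟩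
      · exact map_ne_cone _ _ hgf
      · have : w = u := by simpa using hwu
        exact hu (this ▸ hw)
  · rintro ⟨h1, h2⟩
    rcases mem_coneOn.1 h1 with ⟨f, hf, rfl⟩ | ⟨u, -, rfl⟩
    · exact Or.inl ⟨f, Finset.mem_sdiff.2 ⟨hf, fun h => h2 (mem_coneOn.2 (Or.inl ⟨f, h, rfl⟩))⟩, rfl⟩
    · have hu := (hY u).2 fun h => h2 (mem_coneOn.2 (Or.inr ⟨u, h, rfl⟩))
      exact Or.inr ⟨u, hu.1, hu.2, rfl⟩
end
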